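/- Let K be a field, S = K[x_1,…,x_n], and f_1,…,f_r a regular sequence of homogeneous elements of degree d; set I = (f_1,…,f_r). For c, e ∈ N let A = K[(I^e)_{ed+c}] be the K-subalgebra of S generated by the homogeneous component of degree ed+c of I^e. Then: (1) if c ≥ d/2 then A is quadratic (its defining ideal is generated by quadrics); (2) if c ≥ d(r−1)/r then A is Koszul. -/

import Mathlib

/-!
Let `P = K[x_1,…,x_n,t_1,…,t_r]` with `deg x_i = (1,0)`, `deg t_i = (0,1)`, and `γ = (c,e)`. The
substitution `φ : t_i ↦ f_i` maps the piece `P_{jγ}` onto the degree-`j` part of `A`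
(`gen_pow`), and, since `f` is a regular sequence, its kernel on such a piece consists of elements
of the ideal `J` of `2`-minors of the matrix with columns `(f_i, t_i)` (`ker_eq`). Thus `A` is the
diagonal of `P/J` along `γ`.

Choose a graded free resolution `G` of `K` over the diagonal algebra `P_γ = ⨁_j P_{jγ}` (`res`).
For a module `N` with homogeneous pieces let `Van i j` mean that the homology of `G ⊗ N` in
position `i` and internal degree `j` vanishes, that is `Tor_i(K, N)_j = 0` over `P_γ`.

* For the diagonal modules `⨁_j P_{jγ+δ}` these groups are concentrated in small degrees
  (`NP_van_vars`, `NP_van_full`): one kills the variables one after the other, multiplication by a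
  variable giving short exact sequences that trade the shift `δ` for the homological position.
* The ideal `J` is reached from `0` by adding one minor at a time. All colon ideals met on the way
  are of the same kind (`mm_regular`), and the resulting short exact sequences bound
  `Tor_i(K, P/J)` by groups `Tor_{i-i'}(K, P(-pd,-q))` with `p, q ≤ i'` and `p ≤ r - 1`
  (`PP_all`). If `pd ≤ (p+1)c` for the relevant `p`, this gives `Tor_i(K, A)_j = 0` over `P_γ` for
  `j > i + 1` (`van_det`).
* The same complex computes `Tor_i(K, K)_j = 0` over `P_γ` for `j > i` (`sesK`). A change of rings
  argument, tensoring `G` with the syzygies of the minimal resolution of `K` over `A`, then yields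
  `β_{ij}(K) = 0` for `j ≠ i` (`linear_of_van`).

The condition `pd ≤ (p+1)c` for `p ≤ 1` is `d ≤ 2c`, and for all `p ≤ r - 1` it follows from
`d(r-1) ≤ rc`.
-/

open DirectSum

universe u v w

/-- A standard graded structure on a commutative `K`-algebra `R`:
an internal direct sum decomposition `R = ⊕_{i∈ℤ} R_i` with `R_i = 0` for `i < 0`,
`R_0 = K·1`, `R_i · R_j = R_{i+j}` and `dim_K R_1 < ∞`. -/
structure StdGrading (K : Type u) [Field K] (R : Type v) [CommRing R] [Algebra K R] :
    Type v where
  gr : ℤ → Submodule K R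
  internal : DirectSum.IsInternal gr
  negBot : ∀ i : ℤ, i < 0 → gr i = ⊥
  zeroEq : gr 0 = Submodule.span K {(1 : R)}
  mulEq : ∀ i j : ℤ, 0 ≤ i → 0 ≤ j → gr i * gr j = gr (i + j)
  finOne : Module.Finite K (gr 1)

variable {K : Type u} [Field K] {R : Type v} [CommRing R] [Algebra K R]

/-- The irrelevant maximal homogeneous ideal `m_R = ⊕_{i>0} R_i`. -/
def StdGrading.maxIdeal (A : StdGrading K R) : Ideal R :=
  Ideal.span {x : R | ∃ i : ℤ, 0 < i ∧ x ∈ A.gr i}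

/-- `g` is a grading making the `R`-module `M` into a graded module over the
standard graded algebra `(R, A)`. -/
def IsGradedModule (A : StdGrading K R) {M : Type w} [AddCommGroup M] [Module K M]
    [Module R M] [IsScalarTower K R M] (g : ℤ → Submodule K M) : Prop :=
  DirectSum.IsInternal g ∧
    ∀ (i j : ℤ), ∀ r ∈ A.gr i, ∀ x ∈ g j, r • x ∈ g (i + j)

/-- The graded free `R`-module with `β i j` basis elements of (internal) degree `j`,
in homological position `i`. -/
abbrev FreeMod (R : Type v) [CommRing R] (β : ℕ → ℤ → ℕ) (i : ℕ) : Type v :=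
  ((j : ℤ) × Fin (β i j)) →₀ R

/-- The degree-`d` graded piece of the graded free module `FreeMod R β i`. -/
def freeGr (A : StdGrading K R) (β : ℕ → ℤ → ℕ) (i : ℕ) (d : ℤ) :
    Submodule K (FreeMod R β i) where
  carrier := {f | ∀ p : (j : ℤ) × Fin (β i j), f p ∈ A.gr (d - p.1)}
  add_mem' := fun hf hg p => by
    simpa using add_mem (hf p) (hg p)
  zero_mem' := fun p => by simp
  smul_mem' := fun c f hf p => by
    simpa using Submodule.smul_mem _ c (hf p)

/-- A minimal graded free resolution of the graded `R`-module `(M, g)` whose graded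
Betti numbers are given by the table `β`: the maps are degree-zero maps of graded
modules, the complex is exact, and the differentials map into `m_R·F`. -/
structure MinFreeRes (A : StdGrading K R) {M : Type w} [AddCommGroup M] [Module K M]
    [Module R M] [IsScalarTower K R M] (g : ℤ → Submodule K M) (β : ℕ → ℤ → ℕ) :
    Type (max v w) where
  eps : FreeMod R β 0 →ₗ[R] M
  d : (i : ℕ) → FreeMod R β (i + 1) →ₗ[R] FreeMod R β i
  eps_surjective : Function.Surjective eps
  exact_eps : Function.Exact ⇑(d 0) ⇑eps
  exact_d : ∀ i : ℕ, Function.Exact ⇑(d (i + 1)) ⇑(d i)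
  graded_eps : ∀ dg : ℤ, ∀ f ∈ freeGr A β 0 dg, eps f ∈ g dg
  graded_d : ∀ (i : ℕ) (dg : ℤ), ∀ f ∈ freeGr A β (i + 1) dg, d i f ∈ freeGr A β i dg
  minimal : ∀ (i : ℕ) (f : FreeMod R β (i + 1)) (p : (j : ℤ) × Fin (β i j)),
    d i f p ∈ A.maxIdeal

/-- `β` is the table of graded Betti numbers of the graded module `(M, g)`,
i.e. there is a minimal graded free resolution realizing it. -/
def HasBettiTable (A : StdGrading K R) {M : Type w} [AddCommGroup M] [Module K M]
    [Module R M] [IsScalarTower K R M] (g : ℤ → Submodule K M) (β : ℕ → ℤ → ℕ) : Prop :=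
  Nonempty (MinFreeRes A g β)

/-- The grading on the residue field `K = R/m_R` of a standard graded algebra. -/
def resGr (A : StdGrading K R) : ℤ → Submodule K (R ⧸ A.maxIdeal) := fun d =>
  (A.gr d).map ((A.maxIdeal.mkQ).restrictScalars K)

/-- `R` is a Koszul algebra: the minimal graded free resolution of the residue field
`K = R/m_R` is linear, i.e. `β_{ij}(K) = 0` for `j ≠ i`. -/
def IsKoszul (A : StdGrading K R) : Prop :=
  ∀ β : ℕ → ℤ → ℕ, HasBettiTable A (resGr A) β →
    ∀ (i : ℕ) (j : ℤ), j ≠ (i : ℤ) → β i j = 0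

universe w' w''

namespace Stmt16

/-! ### Homology of free complexes with coefficients -/

/-- Index data of a complex of graded free modules: in homological position `i` the basis is
indexed by `ι i`, and the basis element `b` has internal degree `deg i b`. -/
structure Ix where
  ι : ℕ → Type u
  deg : ∀ i, ι i → ℤ

/-- A coefficient object for a complex of graded free modules with index data `X`: an abelian
group `M` with a family of subgroups `g j` (the homogeneous pieces; they need not span `M`),
together with operators `act i b : M → M^(ι i)` giving the value of the differential on `b ⊗ m`,
so that the groups `M^(ι i)` form a complex respecting the internal degrees. -/
structure GMod (X : Ix.{u}) where
  M : Type w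
  [grp : AddCommGroup M]
  g : ℤ → AddSubgroup M
  act : ∀ i, X.ι (i + 1) → M →+ (X.ι i →₀ M)
  act_mem : ∀ i b j m, m ∈ g j → ∀ b', act i b m b' ∈ g (j + X.deg (i + 1) b - X.deg i b')
  sq : ∀ i b m, Finsupp.liftAddHom (act i) (act (i + 1) b m) = 0

attribute [instance] GMod.grp

namespace GMod

variable {X : Ix.{u}}

/-- The differential `M^(ι (i+1)) → M^(ι i)`. -/
noncomputable def d (N : GMod.{u, w} X) (i : ℕ) : (X.ι (i + 1) →₀ N.M) →+ (X.ι i →₀ N.M) :=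
  Finsupp.liftAddHom (N.act i)

/-- The chains of internal degree `j` in homological position `i`. -/
def Hm (N : GMod.{u, w} X) (i : ℕ) (j : ℤ) : AddSubgroup (X.ι i →₀ N.M) where
  carrier := {x | ∀ b, x b ∈ N.g (j - X.deg i b)}
  add_mem' hx hy b := by simpa using add_mem (hx b) (hy b)
  zero_mem' b := by simp
  neg_mem' hx b := by simpa using hx b

/-- Chains that are cycles; in position `0` every chain is one. -/
def Cyc (N : GMod.{u, w} X) : ∀ i : ℕ, (X.ι i →₀ N.M) → Prop
  | 0, _ => True
  | i + 1, x => N.d i x = 0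

/-- The homology in position `i` and internal degree `j` vanishes. When the complex is a free
resolution of the residue field this says `Tor_i(M, K)_j = 0`. -/
def Van (N : GMod.{u, w} X) (i : ℕ) (j : ℤ) : Prop :=
  ∀ x ∈ N.Hm i j, N.Cyc i x → ∃ y ∈ N.Hm (i + 1) j, N.d i y = x

lemma d_single (N : GMod.{u, w} X) (i : ℕ) (b : X.ι (i + 1)) (m : N.M) :
    N.d i (Finsupp.single b m) = N.act i b m := by
  simp [d]

lemma d_mem (N : GMod.{u, w} X) {i : ℕ} {j : ℤ} {x : X.ι (i + 1) →₀ N.M}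
    (hx : x ∈ N.Hm (i + 1) j) : N.d i x ∈ N.Hm i j := by
  have : N.d i x = ∑ b ∈ x.support, N.act i b (x b) := by
    simp [d, Finsupp.liftAddHom_apply, Finsupp.sum]
  rw [this]
  refine sum_mem fun b _ b' => ?_
  have := N.act_mem i b _ _ (hx b) b'
  simpa using this

lemma d_d (N : GMod.{u, w} X) (i : ℕ) (x : X.ι (i + 2) →₀ N.M) :
    N.d i (N.d (i + 1) x) = 0 := by
  induction x using Finsupp.induction_linear with
  | zero => simp
  | add x y hx hy => simp [hx, hy]
  | single b m => rw [d_single]; exact N.sq i b m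

lemma cyc_d (N : GMod.{u, w} X) (i : ℕ) (x : X.ι (i + 1) →₀ N.M) : N.Cyc i (N.d i x) := by
  cases i with
  | zero => trivial
  | succ i => exact N.d_d i x

lemma Cyc.sub {N : GMod.{u, w} X} {i : ℕ} {x y : X.ι i →₀ N.M} (hx : N.Cyc i x)
    (hy : N.Cyc i y) : N.Cyc i (x - y) := by
  cases i with
  | zero => trivial
  | succ i =>
    change N.d i (x - y) = 0
    rw [map_sub, show N.d i x = 0 from hx, show N.d i y = 0 from hy, sub_zero]

/-- An additive map compatible with the operators. -/
def IsMor (N : GMod.{u, w} X) (N' : GMod.{u, w'} X) (φ : N.M →+ N'.M) : Prop :=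
  ∀ i b m b', φ (N.act i b m b') = N'.act i b (φ m) b'

variable {N : GMod.{u, w} X} {N' : GMod.{u, w'} X} {N'' : GMod.{u, w''} X}

/-- The map induced on chains by an additive map of coefficients. -/
noncomputable abbrev ext (φ : N.M →+ N'.M) (i : ℕ) :
    (X.ι i →₀ N.M) →+ (X.ι i →₀ N'.M) := Finsupp.mapRange.addMonoidHom φ

lemma IsMor.d_ext {φ : N.M →+ N'.M} (h : IsMor N N' φ) (i : ℕ) (x : X.ι (i + 1) →₀ N.M) :
    N'.d i (ext φ (i + 1) x) = ext φ i (N.d i x) := by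
  induction x using Finsupp.induction_linear with
  | zero => simp
  | add x y hx hy => simp only [map_add, hx, hy]
  | single b m =>
    have : ext φ (i + 1) (Finsupp.single b m) = Finsupp.single b (φ m) := by simp [ext]
    rw [this, d_single, d_single]
    ext b'
    simpa [ext] using (h i b m b').symm

lemma IsMor.cyc {φ : N.M →+ N'.M} (h : IsMor N N' φ) {i : ℕ} {x : X.ι i →₀ N.M}
    (hx : N.Cyc i x) : N'.Cyc i (ext φ i x) := by
  cases i with
  | zero => trivial
  | succ i =>
    change N'.d i _ = 0
    rw [h.d_ext, show N.d i x = 0 from hx, map_zero]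

lemma ext_mem {φ : N.M →+ N'.M} (hφ : ∀ j, ∀ m ∈ N.g j, φ m ∈ N'.g j) {i : ℕ} {j : ℤ}
    {x : X.ι i →₀ N.M} (hx : x ∈ N.Hm i j) : ext φ i x ∈ N'.Hm i j := fun b => by
  simpa [ext] using hφ _ _ (hx b)

/-- Chains are lifted coordinate by coordinate. -/
lemma exists_lift {φ : N.M →+ N'.M} {i : ℕ} {j : ℤ} (x : X.ι i →₀ N'.M)
    (h : ∀ b, ∃ m ∈ N.g (j - X.deg i b), φ m = x b) : ∃ y ∈ N.Hm i j, ext φ i y = x := by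
  classical
  choose m hm hm' using h
  refine ⟨Finsupp.onFinset x.support (fun b => if x b = 0 then 0 else m b) ?_, ?_, ?_⟩
  · intro b hb
    by_contra hc
    simp at hc
    simp [hc] at hb
  · intro b
    by_cases hb : x b = 0
    · simp [hb]
    · simpa [hb] using hm b
  · ext b
    by_cases hb : x b = 0
    · simp [ext, hb]
    · simp [ext, hb, hm']

/-- A sequence `N' → N → N''` that is short exact in every internal degree. -/
structure SES (N' : GMod.{u, w'} X) (N : GMod.{u, w} X) (N'' : GMod.{u, w''} X) where
  φ : N'.M →+ N.M
  ψ : N.M →+ N''.M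
  morφ : IsMor N' N φ
  morψ : IsMor N N'' ψ
  gφ : ∀ j, ∀ m ∈ N'.g j, φ m ∈ N.g j
  gψ : ∀ j, ∀ m ∈ N.g j, ψ m ∈ N''.g j
  zero : ∀ j, ∀ m ∈ N'.g j, ψ (φ m) = 0
  inj : ∀ j, ∀ m ∈ N'.g j, φ m = 0 → m = 0
  exact : ∀ j, ∀ m ∈ N.g j, ψ m = 0 → ∃ m' ∈ N'.g j, φ m' = m
  surj : ∀ j, ∀ m ∈ N''.g j, ∃ m' ∈ N.g j, ψ m' = m

namespace SES

variable (s : SES N' N N'')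
include s

lemma inj_ext {i : ℕ} {j : ℤ} {x : X.ι i →₀ N'.M} (hx : x ∈ N'.Hm i j)
    (h : ext s.φ i x = 0) : x = 0 := by
  ext b
  refine s.inj _ _ (hx b) ?_
  simpa [ext] using DFunLike.congr_fun h b

lemma zero_ext {i : ℕ} {j : ℤ} {x : X.ι i →₀ N'.M} (hx : x ∈ N'.Hm i j) :
    ext s.ψ i (ext s.φ i x) = 0 := by
  ext b
  simpa [ext] using s.zero _ _ (hx b)

lemma exact_ext {i : ℕ} {j : ℤ} {x : X.ι i →₀ N.M} (hx : x ∈ N.Hm i j)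
    (h : ext s.ψ i x = 0) : ∃ y ∈ N'.Hm i j, ext s.φ i y = x :=
  exists_lift x fun b => s.exact _ _ (hx b) (by simpa [ext] using DFunLike.congr_fun h b)

lemma surj_ext {i : ℕ} {j : ℤ} {x : X.ι i →₀ N''.M} (hx : x ∈ N''.Hm i j) :
    ∃ y ∈ N.Hm i j, ext s.ψ i y = x :=
  exists_lift x fun b => s.surj _ _ (hx b)

lemma cyc_of_ext {i : ℕ} {j : ℤ} {x : X.ι i →₀ N'.M} (hx : x ∈ N'.Hm i j)
    (h : N.Cyc i (ext s.φ i x)) : N'.Cyc i x := by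
  cases i with
  | zero => trivial
  | succ i =>
    refine s.inj_ext (N'.d_mem hx) ?_
    rw [← s.morφ.d_ext]
    exact h

lemma van_mid {i : ℕ} {j : ℤ} (h' : N'.Van i j) (h'' : N''.Van i j) : N.Van i j := by
  intro x hx hc
  obtain ⟨y'', hy'', e1⟩ := h'' _ (ext_mem s.gψ hx) (s.morψ.cyc hc)
  obtain ⟨y, hy, rfl⟩ := s.surj_ext hy''
  obtain ⟨x', hx', e2⟩ := s.exact_ext (sub_mem hx (N.d_mem hy))
    (by rw [map_sub, ← e1, s.morψ.d_ext, sub_self])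
  obtain ⟨y', hy', e3⟩ := h' _ hx' (s.cyc_of_ext hx' (e2 ▸ hc.sub (N.cyc_d _ _)))
  refine ⟨y + ext s.φ _ y', add_mem hy (ext_mem s.gφ hy'), ?_⟩
  rw [map_add, s.morφ.d_ext, e3, e2]
  abel

lemma van_right_zero {j : ℤ} (h : N.Van 0 j) : N''.Van 0 j := by
  intro x hx _
  obtain ⟨y, hy, rfl⟩ := s.surj_ext hx
  obtain ⟨z, hz, e⟩ := h y hy trivial
  exact ⟨ext s.ψ _ z, ext_mem s.gψ hz, by rw [s.morψ.d_ext, e]⟩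

lemma van_right {i : ℕ} {j : ℤ} (h : N.Van (i + 1) j) (h' : N'.Van i j) :
    N''.Van (i + 1) j := by
  intro x'' hx'' hc
  obtain ⟨x, hx, rfl⟩ := s.surj_ext hx''
  obtain ⟨x', hx', e1⟩ := s.exact_ext (N.d_mem hx) (by rw [← s.morψ.d_ext]; exact hc)
  obtain ⟨y', hy', e2⟩ := h' x' hx' (s.cyc_of_ext hx' (e1 ▸ N.cyc_d _ _))
  obtain ⟨y, hy, e3⟩ := h (x - ext s.φ _ y') (sub_mem hx (ext_mem s.gφ hy')) (by
    change N.d i _ = 0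
    rw [map_sub, s.morφ.d_ext, e2, e1, sub_self])
  refine ⟨ext s.ψ _ y, ext_mem s.gψ hy, ?_⟩
  rw [s.morψ.d_ext, e3, map_sub, s.zero_ext hy', sub_zero]

lemma van_left {i : ℕ} {j : ℤ} (h'' : N''.Van (i + 1) j) (h : N.Van i j) : N'.Van i j := by
  intro x' hx' hc
  obtain ⟨y, hy, e1⟩ := h _ (ext_mem s.gφ hx') (s.morφ.cyc hc)
  obtain ⟨z'', hz'', e2⟩ := h'' (ext s.ψ _ y) (ext_mem s.gψ hy) (by
    change N''.d i _ = 0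
    rw [s.morψ.d_ext, e1, s.zero_ext hx'])
  obtain ⟨z, hz, rfl⟩ := s.surj_ext hz''
  obtain ⟨y', hy', e3⟩ := s.exact_ext (sub_mem hy (N.d_mem hz)) (by
    rw [map_sub, ← e2, s.morψ.d_ext, sub_self])
  refine ⟨y', hy', ?_⟩
  rw [← sub_eq_zero]
  refine s.inj_ext (sub_mem (N'.d_mem hy') hx') ?_
  rw [map_sub, ← s.morφ.d_ext, e3, map_sub, N.d_d, e1, sub_zero, sub_self]

/-- Passing to a cokernel: vanishing in position `i` follows from vanishing of the middle term
in position `i` and of the left term in position `i - 1`. -/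
lemma van_right' {i : ℕ} {j : ℤ} (h : N.Van i j) (h' : ∀ i', i' + 1 = i → N'.Van i' j) :
    N''.Van i j := by
  cases i with
  | zero => exact s.van_right_zero h
  | succ i => exact s.van_right h (h' i rfl)

end SES

/-- If all homogeneous pieces vanish, so does the homology. -/
lemma van_of_bot (h : ∀ j, ∀ m ∈ N.g j, m = 0) (i : ℕ) (j : ℤ) : N.Van i j := by
  intro x hx _
  refine ⟨0, zero_mem _, ?_⟩
  rw [map_zero]
  ext b
  exact (h _ _ (hx b)).symm

/-- A morphism that is bijective in every internal degree. -/
structure DegIso (N : GMod.{u, w} X) (N' : GMod.{u, w'} X) where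
  φ : N.M →+ N'.M
  mor : IsMor N N' φ
  gφ : ∀ j, ∀ m ∈ N.g j, φ m ∈ N'.g j
  inj : ∀ j, ∀ m ∈ N.g j, φ m = 0 → m = 0
  surj : ∀ j, ∀ m ∈ N'.g j, ∃ m' ∈ N.g j, φ m' = m

/-- The zero coefficient object. -/
noncomputable def triv (X : Ix.{u}) : GMod.{u, 0} X where
  M := PUnit
  g _ := ⊤
  act _ _ := 0
  act_mem _ _ _ _ _ _ := AddSubgroup.mem_top _
  sq _ _ _ := by simp

/-- A degreewise isomorphism as a short exact sequence with zero cokernel. -/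
noncomputable def DegIso.ses (f : DegIso N N') : SES N N' (triv X) where
  φ := f.φ
  ψ := 0
  morφ := f.mor
  morψ _ _ _ _ := rfl
  gφ := f.gφ
  gψ _ _ _ := AddSubgroup.mem_top _
  zero _ _ _ := rfl
  inj := f.inj
  exact j m hm _ := f.surj j m hm
  surj _ _ _ := ⟨0, zero_mem _, rfl⟩

lemma DegIso.van (f : DegIso N N') {i : ℕ} {j : ℤ} (h : N.Van i j) : N'.Van i j :=
  f.ses.van_mid h (van_of_bot (fun _ _ _ => rfl) i j)

lemma DegIso.van_symm (f : DegIso N N') {i : ℕ} {j : ℤ} (h : N'.Van i j) : N.Van i j :=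
  f.ses.van_left (van_of_bot (fun _ _ _ => rfl) _ j) h

end GMod

/-- A complex of graded free `R`-modules with index data `X`, given by its matrices `D`, whose
entries are homogeneous for the family `𝒜` of subgroups of `R`. -/
structure RC (X : Ix.{u}) (R : Type v) [CommRing R] (𝒜 : ℤ → AddSubgroup R) where
  D : ∀ i, X.ι (i + 1) → X.ι i →₀ R
  homog : ∀ i b b', D i b b' ∈ 𝒜 (X.deg (i + 1) b - X.deg i b')
  sq : ∀ i b, Finsupp.linearCombination R (D i) (D (i + 1) b) = 0

namespace RC

variable {X : Ix.{u}} {R : Type v} [CommRing R] {𝒜 : ℤ → AddSubgroup R}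

/-- Tensoring the complex `C` with an `R`-module `M` carrying a family of homogeneous pieces. -/
noncomputable abbrev toG (C : RC X R 𝒜) (M : Type w) [AddCommGroup M] [Module R M]
    (g : ℤ → AddSubgroup M)
    (hg : ∀ i j r m, r ∈ 𝒜 i → m ∈ g j → r • m ∈ g (i + j)) : GMod.{u, w} X where
  M := M
  g := g
  act i b :=
    { toFun := fun m => (C.D i b).mapRange (fun r => r • m) (zero_smul R m)
      map_zero' := by ext; simp
      map_add' := fun x y => by ext; simp }
  act_mem i b j m hm b' := by
    have := hg _ _ _ _ (C.homog i b b') hm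
    simp only [AddMonoidHom.coe_mk, ZeroHom.coe_mk, Finsupp.mapRange_apply]
    convert this using 2
    ring
  sq i b m := by
    have key : ∀ z : X.ι (i + 1) →₀ R, Finsupp.liftAddHom (M := M) (N := X.ι i →₀ M)
        (fun b : X.ι (i + 1) =>
          ({ toFun := fun m => (C.D i b).mapRange (fun r => r • m) (zero_smul R m)
             map_zero' := by ext; simp
             map_add' := fun x y => by ext; simp } : M →+ (X.ι i →₀ M)))
        (z.mapRange (fun r => r • m) (zero_smul R m)) =
        (Finsupp.linearCombination R (C.D i) z).mapRange (fun r => r • m) (zero_smul R m) := by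
      intro z
      induction z using Finsupp.induction_linear with
      | zero => simp
      | add x y hx hy =>
        rw [Finsupp.mapRange_add (fun a b => add_smul a b m), map_add, hx, hy, map_add,
          Finsupp.mapRange_add (fun a b => add_smul a b m)]
      | single b a =>
        rw [Finsupp.mapRange_single, Finsupp.liftAddHom_apply_single]
        ext b'
        simp only [Finsupp.mapRange_apply, AddMonoidHom.coe_mk, ZeroHom.coe_mk,
          Finsupp.linearCombination_single, Finsupp.smul_apply, smul_eq_mul]
        rw [← mul_smul, mul_comm]
    refine (key _).trans ?_
    rw [C.sq]
    simp

@[simp] lemma toG_act (C : RC X R 𝒜) (M : Type w) [AddCommGroup M] [Module R M]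
    (g : ℤ → AddSubgroup M) (hg) (i b) (m : M) (b') :
    ((C.toG M g hg).act i b m : X.ι i →₀ M) b' = C.D i b b' • m := rfl

end RC

end Stmt16

namespace Stmt16

namespace RC

variable {X : Ix.{u}} {R : Type v} [CommRing R] {𝒜 : ℤ → AddSubgroup R}

/-- Over the ring itself the differential is the usual matrix product. -/
lemma toG_d_self (C : RC X R 𝒜) (g : ℤ → AddSubgroup R) (hg) (i : ℕ) (x : X.ι (i + 1) →₀ R) :
    ((C.toG R g hg).d i x : X.ι i →₀ R) = Finsupp.linearCombination R (C.D i) x := by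
  induction x using Finsupp.induction_linear with
  | zero => exact (map_zero _).trans (map_zero _).symm
  | add x y hx hy => exact (map_add _ _ _).trans (by rw [hx, hy, map_add])
  | single b a =>
    refine (GMod.d_single _ _ _ _).trans ?_
    ext b'
    rw [toG_act, Finsupp.linearCombination_single, Finsupp.smul_apply, smul_eq_mul, smul_eq_mul,
      mul_comm]

end RC

/-! ### A free resolution with homogeneous entries -/

section Resolution

variable {R : Type u} [CommRing R]

/-- Two consecutive bases and the differential between them. -/
structure Stage (R : Type u) [CommRing R] where
  ι : Type u
  κ : Type u
  deg : ι → ℤ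
  kdeg : κ → ℤ
  D : κ → ι →₀ R

/-- The next stage of the resolution: one new basis element for every homogeneous cycle. -/
noncomputable def Stage.next (𝒜 : ℤ → AddSubgroup R) (s : Stage R) : Stage R where
  ι := s.κ
  κ := {p : ℤ × (s.κ →₀ R) // (∀ b, p.2 b ∈ 𝒜 (p.1 - s.kdeg b)) ∧
    Finsupp.linearCombination R s.D p.2 = 0}
  deg := s.kdeg
  kdeg p := p.1.1
  D p := p.1.2

/-- The stages of the (large) resolution of `R / (𝒜 l : l ≥ 1)`. -/
noncomputable def stage (𝒜 : ℤ → AddSubgroup R) : ℕ → Stage R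
  | 0 =>
    { ι := PUnit
      κ := {p : ℤ × R // 1 ≤ p.1 ∧ p.2 ∈ 𝒜 p.1}
      deg := fun _ => 0
      kdeg := fun p => p.1.1
      D := fun p => Finsupp.single PUnit.unit p.1.2 }
  | i + 1 => (stage 𝒜 i).next 𝒜

/-- The index data of the resolution. -/
noncomputable def resIx (𝒜 : ℤ → AddSubgroup R) : Ix.{u} where
  ι i := (stage 𝒜 i).ι
  deg i := (stage 𝒜 i).deg

/-- The resolution as a complex. -/
noncomputable def res (𝒜 : ℤ → AddSubgroup R) : RC (resIx 𝒜) R 𝒜 where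
  D i := (stage 𝒜 i).D
  homog i b b' := by
    cases i with
    | zero =>
      obtain ⟨⟨l, a⟩, h1, h2⟩ := b
      change (Finsupp.single PUnit.unit a) b' ∈ 𝒜 (l - 0)
      have : b' = PUnit.unit := rfl
      rw [this, Finsupp.single_eq_same, sub_zero]
      exact h2
    | succ i => exact b.2.1 b'
  sq i b := b.2.2

/-- The unique basis element in position `0`. -/
def resPt (𝒜 : ℤ → AddSubgroup R) : (resIx 𝒜).ι 0 := PUnit.unit

lemma resPt_eq (𝒜 : ℤ → AddSubgroup R) (b : (resIx 𝒜).ι 0) : b = resPt 𝒜 := rfl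

lemma resPt_deg (𝒜 : ℤ → AddSubgroup R) (b : (resIx 𝒜).ι 0) : (resIx 𝒜).deg 0 b = 0 := rfl

lemma one_le_deg (𝒜 : ℤ → AddSubgroup R) (b : (resIx 𝒜).ι 1) : 1 ≤ (resIx 𝒜).deg 1 b := b.2.1

lemma exists_gen (𝒜 : ℤ → AddSubgroup R) {l : ℤ} (hl : 1 ≤ l) {a : R} (ha : a ∈ 𝒜 l) :
    ∃ b : (resIx 𝒜).ι 1, (resIx 𝒜).deg 1 b = l ∧
      (res 𝒜).D 0 b = Finsupp.single (resPt 𝒜) a :=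
  ⟨⟨(l, a), hl, ha⟩, rfl, rfl⟩

lemma exists_cyc (𝒜 : ℤ → AddSubgroup R) {i : ℕ} {j : ℤ} {z : (resIx 𝒜).ι (i + 1) →₀ R}
    (hz : ∀ b, z b ∈ 𝒜 (j - (resIx 𝒜).deg (i + 1) b))
    (h0 : Finsupp.linearCombination R ((res 𝒜).D i) z = 0) :
    ∃ b : (resIx 𝒜).ι (i + 2), (resIx 𝒜).deg (i + 2) b = j ∧ (res 𝒜).D (i + 1) b = z :=
  ⟨⟨(j, z), hz, h0⟩, rfl, rfl⟩

/-- Acyclicity of the resolution, for the ring with its homogeneous pieces shifted by `s`. -/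
lemma res_van (𝒜 : ℤ → AddSubgroup R) (h1 : (1 : R) ∈ 𝒜 0) (s : ℤ) (g : ℤ → AddSubgroup R)
    (hgs : ∀ j, g j = 𝒜 (j - s)) (hg) (i : ℕ) (j : ℤ) (hij : 1 ≤ i ∨ s < j) :
    ((res 𝒜).toG R g hg).Van i j := by
  have key : ∀ (x : (resIx 𝒜).ι i →₀ R) (b : (resIx 𝒜).ι (i + 1)),
      (resIx 𝒜).deg (i + 1) b = j - s → (res 𝒜).D i b = x →
      ∃ y ∈ ((res 𝒜).toG R g hg).Hm (i + 1) j, ((res 𝒜).toG R g hg).d i y = x := by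
    intro x b hb hx
    refine ⟨(Finsupp.single b (1 : R) : (resIx 𝒜).ι (i + 1) →₀ R), ?_, ?_⟩
    · intro b'
      change (Finsupp.single b (1 : R) : (resIx 𝒜).ι (i + 1) →₀ R) b' ∈ g _
      classical
      rw [Finsupp.single_apply]
      split_ifs with h
      · subst h
        rw [hgs, hb]
        simpa using h1
      · exact zero_mem _
    · refine (RC.toG_d_self _ _ _ _ _).trans ?_
      rw [Finsupp.linearCombination_single, one_smul, hx]
  intro x hx hc
  have hx' : ∀ b, (x : (resIx 𝒜).ι i →₀ R) b ∈ 𝒜 (j - (resIx 𝒜).deg i b - s) := fun b => by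
    rw [← hgs]; exact hx b
  cases i with
  | zero =>
    have hs : s < j := by omega
    have h0 := hx' (resPt 𝒜)
    rw [resPt_deg, sub_zero] at h0
    obtain ⟨b, hb, hD⟩ := exists_gen 𝒜 (by omega) h0
    refine key x b hb ?_
    rw [hD]
    ext b'
    rw [resPt_eq 𝒜 b', Finsupp.single_eq_same]
  | succ i =>
    obtain ⟨b, hb, hD⟩ := exists_cyc 𝒜 (j := j - s) (z := x) (fun b => by
      convert hx' b using 2; ring) ((RC.toG_d_self _ _ _ _ _).symm.trans hc)
    exact key x b hb hD

end Resolution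

end Stmt16

namespace Stmt16

open MvPolynomial

/-! ### Homogeneous components and homogeneous ideals -/

section Weighted

variable {K : Type u} [Field K] {σ : Type} {M : Type} [AddCommGroup M]

lemma whc_mul_left {w : σ → M} {v : MvPolynomial σ K} {μ : M}
    (hv : IsWeightedHomogeneous w v μ) (m : M) (g : MvPolynomial σ K) :
    weightedHomogeneousComponent w m (v * g) = v * weightedHomogeneousComponent w (m - μ) g := by
  classical
  let _ := weightedGradedAlgebra K w
  have h := DirectSum.coe_decompose_mul_add_of_left_mem (weightedHomogeneousSubmodule K w)
    (i := μ) (j := m - μ) (a := v) (b := g) hv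
  rw [add_sub_cancel] at h
  have e := fun (F : MvPolynomial σ K) (k : M) =>
    weightedDecomposition.decompose'_apply (R := K) (w := w) F k
  exact (e _ _).symm.trans (h.trans (congrArg (v * ·) (e _ _)))

/-- An ideal containing the homogeneous components of its elements. -/
def HomIdeal (w : σ → M) (J : Ideal (MvPolynomial σ K)) : Prop :=
  ∀ F ∈ J, ∀ m, weightedHomogeneousComponent w m F ∈ J

lemma homIdeal_span {w : σ → M} (s : Set (MvPolynomial σ K))
    (h : ∀ v ∈ s, ∃ μ, IsWeightedHomogeneous w v μ) : HomIdeal w (Ideal.span s) := by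
  intro F hF m
  have : ∀ g : MvPolynomial σ K, weightedHomogeneousComponent w m (g * F) ∈ Ideal.span s := by
    refine Submodule.span_induction (p := fun F _ => ∀ g : MvPolynomial σ K,
      weightedHomogeneousComponent w m (g * F) ∈ Ideal.span s) ?_ ?_ ?_ ?_ hF
    · intro v hv g
      obtain ⟨μ, hμ⟩ := h v hv
      rw [mul_comm, whc_mul_left hμ]
      exact Ideal.mul_mem_right _ _ (Ideal.subset_span hv)
    · simp
    · intro x y _ _ hx hy g
      rw [mul_add, map_add]
      exact add_mem (hx g) (hy g)
    · intro a x _ hx g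
      rw [smul_eq_mul, ← mul_assoc]
      exact hx _
  simpa using this 1

lemma HomIdeal.sup {w : σ → M} {I J : Ideal (MvPolynomial σ K)} (hI : HomIdeal w I)
    (hJ : HomIdeal w J) : HomIdeal w (I ⊔ J) := by
  intro F hF m
  obtain ⟨a, ha, b, hb, rfl⟩ := Submodule.mem_sup.1 hF
  rw [map_add]
  exact add_mem (Ideal.mem_sup_left (hI a ha m)) (Ideal.mem_sup_right (hJ b hb m))

end Weighted

/-! ### The bigraded polynomial ring -/

section Bigraded

variable {K : Type u} [Field K] {n r : ℕ}

/-- The bidegrees of the variables: `x_i ↦ (1,0)` and `t_i ↦ (0,1)`. -/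
def pw (n r : ℕ) : Fin n ⊕ Fin r → ℤ × ℤ := Sum.elim (fun _ => (1, 0)) (fun _ => (0, 1))

/-- The polynomial ring in the variables `x_i` and `t_i`. -/
abbrev PR (K : Type u) [Field K] (n r : ℕ) : Type u := MvPolynomial (Fin n ⊕ Fin r) K

lemma weight_pw_fst (m : Fin n ⊕ Fin r →₀ ℕ) :
    (Finsupp.weight (pw n r) m).1 = ∑ i, (m (Sum.inl i) : ℤ) := by
  rw [Finsupp.weight_apply, Finsupp.sum_fintype _ _ (by simp)]
  simp [pw, Prod.fst_sum]

lemma weight_pw_snd (m : Fin n ⊕ Fin r →₀ ℕ) :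
    (Finsupp.weight (pw n r) m).2 = ∑ i, (m (Sum.inr i) : ℤ) := by
  rw [Finsupp.weight_apply, Finsupp.sum_fintype _ _ (by simp)]
  simp [pw, Prod.snd_sum]

lemma weight_pw_nonneg (m : Fin n ⊕ Fin r →₀ ℕ) : 0 ≤ Finsupp.weight (pw n r) m := by
  refine ⟨?_, ?_⟩
  · rw [weight_pw_fst]; exact Finset.sum_nonneg fun _ _ => by positivity
  · rw [weight_pw_snd]; exact Finset.sum_nonneg fun _ _ => by positivity

lemma eq_zero_of_neg {δ : ℤ × ℤ} (hδ : ¬ 0 ≤ δ) {F : PR K n r}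
    (hF : IsWeightedHomogeneous (pw n r) F δ) : F = 0 := by
  ext m
  by_contra h
  exact hδ ((hF h) ▸ weight_pw_nonneg m)

/-- The ideal generated by a set of variables. -/
noncomputable def bI (K : Type u) [Field K] {n r : ℕ} (V : Finset (Fin n ⊕ Fin r)) : Ideal (PR K n r) :=
  Ideal.span (X '' (V : Set (Fin n ⊕ Fin r)))

lemma bI_homIdeal {M : Type} [AddCommGroup M] (w : Fin n ⊕ Fin r → M)
    (V : Finset (Fin n ⊕ Fin r)) : HomIdeal w (bI K V) :=
  homIdeal_span _ (by rintro _ ⟨i, -, rfl⟩; exact ⟨_, isWeightedHomogeneous_X K w i⟩)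

lemma bI_insert (V : Finset (Fin n ⊕ Fin r)) (v : Fin n ⊕ Fin r) :
    bI K (insert v V) = bI K V ⊔ Ideal.span {X v} := by
  rw [bI, bI, Finset.coe_insert, Set.image_insert_eq, Ideal.span_insert, sup_comm]

lemma X_mul_mem_bI {V : Finset (Fin n ⊕ Fin r)} {v : Fin n ⊕ Fin r} (hv : v ∉ V)
    (F : PR K n r) : X v * F ∈ bI K V ↔ F ∈ bI K V := by
  refine ⟨fun h => ?_, fun h => Ideal.mul_mem_left _ _ h⟩
  rw [bI, mem_ideal_span_X_image] at h ⊢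
  intro m hm
  obtain ⟨i, hi, hne⟩ := h (Finsupp.single v 1 + m) (by
    rw [support_X_mul]; exact Finset.mem_map.2 ⟨m, hm, rfl⟩)
  refine ⟨i, hi, ?_⟩
  have : v ≠ i := by rintro rfl; exact hv hi
  simpa [Finsupp.single_apply, this] using hne

lemma mem_bI_of_fst {V : Finset (Fin n ⊕ Fin r)} (hV : ∀ i, Sum.inl i ∈ V) {δ : ℤ × ℤ}
    (hδ : 0 < δ.1) {F : PR K n r} (hF : IsWeightedHomogeneous (pw n r) F δ) : F ∈ bI K V := by
  rw [bI, mem_ideal_span_X_image]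
  intro m hm
  by_contra! hc
  have h1 := hF (mem_support_iff.1 hm)
  rw [← h1, weight_pw_fst, Finset.sum_eq_zero (fun i _ => by simp [hc _ (hV i)])] at hδ
  exact lt_irrefl _ hδ

lemma mem_bI_of_snd {V : Finset (Fin n ⊕ Fin r)} (hV : ∀ i, Sum.inr i ∈ V) {δ : ℤ × ℤ}
    (hδ : 0 < δ.2) {F : PR K n r} (hF : IsWeightedHomogeneous (pw n r) F δ) : F ∈ bI K V := by
  rw [bI, mem_ideal_span_X_image]
  intro m hm
  by_contra! hc
  have h1 := hF (mem_support_iff.1 hm)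
  rw [← h1, weight_pw_snd, Finset.sum_eq_zero (fun i _ => by simp [hc _ (hV i)])] at hδ
  exact lt_irrefl _ hδ

/-- The diagonal family `j ↦ P_{jγ}`. -/
noncomputable def dg (K : Type u) [Field K] (n r : ℕ) (γ : ℤ × ℤ) (j : ℤ) : AddSubgroup (PR K n r) :=
  (weightedHomogeneousSubmodule K (pw n r) (j • γ)).toAddSubgroup

lemma mem_dg {γ : ℤ × ℤ} {j : ℤ} {F : PR K n r} :
    F ∈ dg K n r γ j ↔ IsWeightedHomogeneous (pw n r) F (j • γ) := Iff.rfl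

lemma not_nonneg_of_neg {γ : ℤ × ℤ} (hγ : 0 < γ) {j : ℤ} (hj : j < 0) : ¬ 0 ≤ j • γ := by
  intro h
  obtain ⟨h1, h2⟩ := hγ
  apply h2
  have a1 := h1.1; have a2 := h1.2; have b1 := h.1; have b2 := h.2
  simp at a1 a2 b1 b2
  exact ⟨by simp; nlinarith, by simp; nlinarith⟩

/-- The pieces `(P/J)_{jγ+δ}`, replaced by zero for `j ∉ T`. -/
noncomputable def fam {K : Type u} [Field K] {n r : ℕ} (γ : ℤ × ℤ) (J : Ideal (PR K n r)) (δ : ℤ × ℤ)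
    (T : UpperSet ℤ) (j : ℤ) : AddSubgroup (PR K n r ⧸ J) where
  carrier := {m | (j ∉ T → m = 0) ∧
    ∃ F, IsWeightedHomogeneous (pw n r) F (j • γ + δ) ∧ Ideal.Quotient.mk J F = m}
  add_mem' := by
    rintro _ _ ⟨h1, F, hF, rfl⟩ ⟨h2, G, hG, rfl⟩
    exact ⟨fun h => by rw [h1 h, h2 h, add_zero], F + G, hF.add hG, map_add _ _ _⟩
  zero_mem' := ⟨fun _ => rfl, 0, isWeightedHomogeneous_zero _ _ _, map_zero _⟩
  neg_mem' := by
    rintro _ ⟨h1, F, hF, rfl⟩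
    exact ⟨fun h => by rw [h1 h, neg_zero], -F, hF.neg, map_neg _ _⟩

lemma fam_smul {γ : ℤ × ℤ} (hγ : 0 < γ) (J : Ideal (PR K n r)) (δ : ℤ × ℤ) (T : UpperSet ℤ)
    (i j : ℤ) (a : PR K n r) (m : PR K n r ⧸ J) (ha : a ∈ dg K n r γ i)
    (hm : m ∈ fam γ J δ T j) : a • m ∈ fam γ J δ T (i + j) := by
  obtain ⟨h1, F, hF, rfl⟩ := hm
  refine ⟨fun h => ?_, a * F, ?_, ?_⟩
  · by_cases hi : 0 ≤ i
    · rw [h1 (fun hj => h (T.upper (by omega) hj)), smul_zero]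
    · rw [eq_zero_of_neg (not_nonneg_of_neg hγ (not_le.1 hi)) ha, zero_smul]
  · rw [add_smul, add_assoc]
    exact IsWeightedHomogeneous.mul ha hF
  · rfl

/-- The module `P/J` with the pieces `fam`, as a coefficient object for the resolution over `P`
of the residue field of the diagonal. -/
noncomputable abbrev NP {γ : ℤ × ℤ} (hγ : 0 < γ) (J : Ideal (PR K n r)) (δ : ℤ × ℤ)
    (T : UpperSet ℤ) : GMod.{u, u} (resIx (dg K n r γ)) :=
  (res (dg K n r γ)).toG (PR K n r ⧸ J) (fam γ J δ T) (fam_smul hγ J δ T)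

variable {γ : ℤ × ℤ} {hγ : 0 < γ}

lemma NP_van_congr {J : Ideal (PR K n r)} {δ δ' : ℤ × ℤ} {T T' : UpperSet ℤ}
    (h : ∀ j, fam γ J δ T j = fam γ J δ' T' j) {i : ℕ} {j : ℤ} (hv : (NP hγ J δ' T').Van i j) :
    (NP hγ J δ T).Van i j := by
  have h' : fam γ J δ T = fam γ J δ' T' := funext h
  have : NP hγ J δ T = NP hγ J δ' T' := by
    unfold NP
    congr 1
  rw [this]
  exact hv

/-- Multiplication by a bihomogeneous element `v` of degree `μ`, as a short exact sequence
`0 → (P/J₀)(-μ) → P/J → P/J₁ → 0` where `J₀ = J : v` and `J₁ = J + (v)`. -/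
noncomputable def stepSES {J0 J J1 : Ideal (PR K n r)} {v : PR K n r} {μ : ℤ × ℤ}
    (hv : IsWeightedHomogeneous (pw n r) v μ) (hJ : HomIdeal (pw n r) J)
    (h1 : J1 = J ⊔ Ideal.span {v}) (h0 : ∀ g, v * g ∈ J ↔ g ∈ J0) (δ δ' : ℤ × ℤ)
    (hδ : δ' = δ - μ) (T : UpperSet ℤ) :
    GMod.SES (NP hγ J0 δ' T) (NP hγ J δ T) (NP hγ J1 δ T) where
  φ := (Submodule.mapQ J0 J (LinearMap.mulLeft (PR K n r) v)
    (fun g hg => (h0 g).2 hg)).toAddMonoidHom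
  ψ := (Submodule.mapQ J J1 LinearMap.id (by
    rw [h1]; exact fun g hg => Ideal.mem_sup_left hg)).toAddMonoidHom
  morφ _ _ _ _ := map_smul (Submodule.mapQ J0 J (LinearMap.mulLeft (PR K n r) v)
    (fun g hg => (h0 g).2 hg)) _ _
  morψ _ _ _ _ := map_smul (Submodule.mapQ J J1 LinearMap.id (by
    rw [h1]; exact fun g hg => Ideal.mem_sup_left hg)) _ _
  gφ := by
    rintro j _ ⟨h, F, hF, rfl⟩
    refine ⟨fun hj => ?_, v * F, ?_, rfl⟩
    · rw [h hj, map_zero]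
    · have := hv.mul hF
      rwa [show μ + (j • γ + δ') = j • γ + δ by rw [hδ]; abel] at this
  gψ := by
    rintro j _ ⟨h, F, hF, rfl⟩
    exact ⟨fun hj => by rw [h hj, map_zero], F, hF, rfl⟩
  zero := by
    rintro j _ ⟨h, F, hF, rfl⟩
    refine Ideal.Quotient.eq_zero_iff_mem.2 (show v * F ∈ J1 from ?_)
    rw [h1]
    exact Ideal.mem_sup_right (Ideal.mul_mem_right _ _ (Ideal.mem_span_singleton_self v))
  inj := by
    rintro j _ ⟨h, F, hF, rfl⟩ h2
    exact Ideal.Quotient.eq_zero_iff_mem.2 ((h0 F).1 (Ideal.Quotient.eq_zero_iff_mem.1 h2))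
  exact := by
    rintro j _ ⟨h, F, hF, rfl⟩ h2
    have h3 : F ∈ J1 := Ideal.Quotient.eq_zero_iff_mem.1 h2
    by_cases hj : j ∈ T
    swap
    · exact ⟨0, zero_mem _, by rw [h hj, map_zero]⟩
    rw [h1] at h3
    obtain ⟨a, ha, b, hb, hab⟩ := Submodule.mem_sup.1 h3
    obtain ⟨g, rfl⟩ := Ideal.mem_span_singleton.1 hb
    have h4 := congrArg (weightedHomogeneousComponent (pw n r) (j • γ + δ)) hab
    rw [map_add, whc_mul_left hv, hF.weightedHomogeneousComponent_same] at h4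
    refine ⟨Ideal.Quotient.mk J0 (weightedHomogeneousComponent (pw n r) (j • γ + δ - μ) g),
      ⟨fun h => absurd hj h, _, ?_, rfl⟩, ?_⟩
    · rw [hδ, ← add_sub_assoc]
      exact weightedHomogeneousComponent_isWeightedHomogeneous _ _
    · change Ideal.Quotient.mk J (v * _) = _
      refine Ideal.Quotient.eq.2 ?_
      rw [← h4]
      have := J.neg_mem (hJ a ha (j • γ + δ))
      convert this using 1
      ring
  surj := by
    rintro j _ ⟨h, F, hF, rfl⟩
    by_cases hj : j ∈ T
    · exact ⟨Ideal.Quotient.mk J F, ⟨fun h => absurd hj h, F, hF, rfl⟩, rfl⟩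
    · exact ⟨0, zero_mem _, by rw [h hj, map_zero]⟩

lemma NP_van_zero {J : Ideal (PR K n r)} {δ : ℤ × ℤ} {T : UpperSet ℤ}
    (h : ∀ j ∈ T, ∀ F, IsWeightedHomogeneous (pw n r) F (j • γ + δ) → F ∈ J) (i : ℕ) (j : ℤ) :
    (NP hγ J δ T).Van i j := by
  refine GMod.van_of_bot ?_ i j
  rintro j _ ⟨h1, F, hF, rfl⟩
  by_cases hj : j ∈ T
  · exact Ideal.Quotient.eq_zero_iff_mem.2 (h j hj F hF)
  · exact h1 hj

end Bigraded

end Stmt16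

namespace Stmt16

open MvPolynomial

/-! ### Vanishing for quotients by variables -/

section Claim

variable {K : Type u} [Field K] {n r : ℕ} {γ : ℤ × ℤ} {hγ : 0 < γ}

/-- The short exact sequence of multiplication by a variable `v ∉ V` on `P/(V)`. -/
noncomputable def varSES {V : Finset (Fin n ⊕ Fin r)} {v : Fin n ⊕ Fin r} (hv : v ∉ V)
    (δ : ℤ × ℤ) (T : UpperSet ℤ) :
    GMod.SES (NP hγ (bI K V) (δ - pw n r v) T) (NP hγ (bI K V) δ T)
      (NP hγ (bI K (insert v V)) δ T) :=
  stepSES (isWeightedHomogeneous_X K (pw n r) v) (bI_homIdeal _ V) (bI_insert V v)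
    (X_mul_mem_bI hv) δ _ rfl T

/-- Pieces below the truncation may be ignored when they are of negative bidegree. -/
lemma NP_van_trunc {J : Ideal (PR K n r)} {δ : ℤ × ℤ} {T T' : UpperSet ℤ}
    (hTT : ∀ j, j ∈ T' → j ∈ T) (h : ∀ j ∈ T, j ∉ T' → ¬ 0 ≤ j • γ + δ) {i : ℕ} {j : ℤ}
    (hv : (NP hγ J δ T').Van i j) : (NP hγ J δ T).Van i j := by
  refine NP_van_congr (fun j => ?_) hv
  ext m
  constructor
  · rintro ⟨h1, F, hF, rfl⟩
    refine ⟨fun hj => ?_, F, hF, rfl⟩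
    by_cases hj' : j ∈ T
    · rw [eq_zero_of_neg (h j hj' hj) hF, map_zero]
    · exact h1 hj'
  · rintro ⟨h1, F, hF, rfl⟩
    exact ⟨fun hj => h1 fun h => hj (hTT j h), F, hF, rfl⟩

/-- The free case: `P` itself, with pieces starting in bidegree `0`. -/
lemma NP_van_free {δ : ℤ × ℤ} {s : ℤ} (h0 : s • γ + δ = 0) {i : ℕ} {j : ℤ} (hij : s < j) :
    (NP hγ (bI K (∅ : Finset (Fin n ⊕ Fin r))) δ (UpperSet.Ici s)).Van i j := by
  have hδ : ∀ j : ℤ, j • γ + δ = (j - s) • γ := fun j => by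
    rw [sub_smul, ← sub_eq_zero]
    rw [← h0]
    abel
  have hbot : bI K (∅ : Finset (Fin n ⊕ Fin r)) = ⊥ := by simp [bI]
  let g : ℤ → AddSubgroup (PR K n r) := fun j => dg K n r γ (j - s)
  have hg : ∀ i j a m, a ∈ dg K n r γ i → m ∈ g j → a • m ∈ g (i + j) := by
    intro i j a m ha hm
    have := IsWeightedHomogeneous.mul (mem_dg.1 ha) (mem_dg.1 hm)
    rw [← add_smul, ← add_sub_assoc] at this
    exact this
  have hone : (1 : PR K n r) ∈ dg K n r γ 0 := by
    rw [mem_dg, zero_smul]; exact isWeightedHomogeneous_one K _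
  have hvan := res_van (dg K n r γ) hone s g (fun _ => rfl) hg i j (Or.inr hij)
  let f : GMod.DegIso ((res (dg K n r γ)).toG (PR K n r) g hg)
      (NP hγ (bI K (∅ : Finset (Fin n ⊕ Fin r))) δ (UpperSet.Ici s)) :=
    { φ := (Submodule.mkQ (bI K (∅ : Finset (Fin n ⊕ Fin r)))).toAddMonoidHom
      mor := fun _ _ _ _ => map_smul (Submodule.mkQ (bI K (∅ : Finset (Fin n ⊕ Fin r)))) _ _
      gφ := by
        intro j F hF
        refine ⟨fun hj => ?_, F, ?_, rfl⟩
        · rw [UpperSet.mem_Ici_iff, not_le] at hj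
          rw [eq_zero_of_neg (not_nonneg_of_neg hγ (by omega)) (mem_dg.1 hF), map_zero]
        · rw [hδ]; exact hF
      inj := by
        intro j F hF h
        have : F ∈ bI K (∅ : Finset (Fin n ⊕ Fin r)) := Ideal.Quotient.eq_zero_iff_mem.1 h
        rwa [hbot] at this
      surj := by
        rintro j _ ⟨h, F, hF, rfl⟩
        rw [hδ] at hF
        exact ⟨F, hF, rfl⟩ }
  exact f.van hvan

lemma pw_inl (i : Fin n) : pw n r (Sum.inl i) = (1, 0) := rfl
lemma pw_inr (i : Fin r) : pw n r (Sum.inr i) = (0, 1) := rfl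

/-- The modules `P/(V)`, truncated at a place where the bidegree is nonnegative, have linearly
bounded homology. -/
lemma NP_van_vars : ∀ (i : ℕ) (V : Finset (Fin n ⊕ Fin r)) (δ : ℤ × ℤ) (s : ℤ),
    0 ≤ s • γ + δ → (0 < γ.1 ∨ δ.1 = 0) → (0 < γ.2 ∨ δ.2 = 0) → ∀ j : ℤ, i + s < j →
    (NP hγ (bI K V) δ (UpperSet.Ici s)).Van i j := by
  intro i
  induction i using Nat.strong_induction_on with
  | _ i IH =>
  have hγ1 : 0 ≤ γ.1 := hγ.1.1
  have hγ2 : 0 ≤ γ.2 := hγ.1.2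
  -- pieces starting in bidegree `0`: induction on the number of variables killed
  have hA : ∀ (V : Finset (Fin n ⊕ Fin r)) (δ : ℤ × ℤ) (s : ℤ), s • γ + δ = 0 →
      (0 < γ.1 ∨ δ.1 = 0) → (0 < γ.2 ∨ δ.2 = 0) → ∀ j : ℤ, i + s < j →
      (NP hγ (bI K V) δ (UpperSet.Ici s)).Van i j := by
    intro V δ s h0 h1 h2 j hj
    induction V using Finset.induction_on with
    | empty => exact NP_van_free h0 (by omega)
    | insert v V hv ih =>
      refine (varSES hv δ _).van_right' ih ?_
      rintro i' rfl
      have e1 : s * γ.1 + δ.1 = 0 := by simpa using congrArg Prod.fst h0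
      have e2 : s * γ.2 + δ.2 = 0 := by simpa using congrArg Prod.snd h0
      by_cases hz : 0 ≤ γ - pw n r v
      · have z1 : 0 ≤ γ.1 - (pw n r v).1 := hz.1
        have z2 : 0 ≤ γ.2 - (pw n r v).2 := hz.2
        refine NP_van_trunc (T' := UpperSet.Ici (s + 1)) ?_ ?_
          (IH i' (by omega) V _ (s + 1) ?_ ?_ ?_ j ?_)
        · intro j hj
          rw [UpperSet.mem_Ici_iff] at hj ⊢
          omega
        · intro j hj hj' hc
          rw [UpperSet.mem_Ici_iff] at hj hj'
          obtain rfl : j = s := by omega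
          rw [← add_sub_assoc, h0] at hc
          have c1 := hc.1; have c2 := hc.2
          rcases v with v | v
          · simp [pw_inl] at c1
          · simp [pw_inr] at c2
        · have : (s + 1) • γ + (δ - pw n r v) = γ - pw n r v := by
            rw [add_smul, one_smul]
            calc _ = (s • γ + δ) + (γ - pw n r v) := by abel
              _ = _ := by rw [h0, zero_add]
          rw [this]; exact hz
        · rcases v with v | v
          · left; simp [pw_inl] at z1; omega
          · simpa [pw_inr] using h1
        · rcases v with v | v
          · simpa [pw_inl] using h2
          · left; simp [pw_inr] at z2; omega
        · push_cast at hj; omega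
      · refine NP_van_zero (fun j _ F hF => ?_) _ _
        rw [eq_zero_of_neg _ hF]
        · exact zero_mem _
        · intro hc
          have c1 := hc.1; have c2 := hc.2
          apply hz
          rcases v with v | v
          · have : 0 < γ.1 := by
              by_contra hn
              have hδ : δ.1 = 0 := by omega
              have hg0 : γ.1 = 0 := by omega
              simp [pw_inl, hδ, hg0] at c1
            exact ⟨by simp [pw_inl]; omega, by simpa [pw_inl] using hγ2⟩
          · have : 0 < γ.2 := by
              by_contra hn
              have hδ : δ.2 = 0 := by omega
              have hg0 : γ.2 = 0 := by omega
              simp [pw_inr, hδ, hg0] at c2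
            exact ⟨by simpa [pw_inr] using hγ1, by simp [pw_inr]; omega⟩
  -- general case: lower the starting bidegree or kill one more variable
  have hB : ∀ (N : ℕ) (V : Finset (Fin n ⊕ Fin r)) (δ : ℤ × ℤ) (s : ℤ), 0 ≤ s • γ + δ →
      (0 < γ.1 ∨ δ.1 = 0) → (0 < γ.2 ∨ δ.2 = 0) →
      (s • γ + δ).1.toNat + (s • γ + δ).2.toNat + (Finset.univ \ V).card = N →
      ∀ j : ℤ, i + s < j → (NP hγ (bI K V) δ (UpperSet.Ici s)).Van i j := by
    intro N
    induction N using Nat.strong_induction_on with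
    | _ N ihN =>
    intro V δ s h0 h1 h2 hN j hj
    have a1 : 0 ≤ s * γ.1 + δ.1 := by simpa using h0.1
    have a2 : 0 ≤ s * γ.2 + δ.2 := by simpa using h0.2
    have step : ∀ v, v ∉ V → 0 ≤ s • γ + (δ - pw n r v) → (0 < γ.1 ∨ (δ - pw n r v).1 = 0) →
        (0 < γ.2 ∨ (δ - pw n r v).2 = 0) →
        (s • γ + (δ - pw n r v)).1.toNat + (s • γ + (δ - pw n r v)).2.toNat <
          (s • γ + δ).1.toNat + (s • γ + δ).2.toNat →
        (NP hγ (bI K V) δ (UpperSet.Ici s)).Van i j := by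
      intro v hv b0 b1 b2 hlt
      refine (varSES hv δ _).van_mid (ihN _ ?_ V _ s b0 b1 b2 rfl j hj)
        (ihN _ ?_ (insert v V) δ s h0 h1 h2 rfl j hj)
      · omega
      · have : (Finset.univ \ insert v V).card < (Finset.univ \ V).card := by
          apply Finset.card_lt_card
          rw [Finset.ssubset_iff]
          refine ⟨v, by simp, ?_⟩
          intro x hx
          simp only [Finset.mem_insert, Finset.mem_sdiff, Finset.mem_univ, true_and] at hx ⊢
          grind
        omega
    by_cases hα : 0 < (s • γ + δ).1
    · by_cases hV : ∀ i, Sum.inl i ∈ V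
      · refine NP_van_zero (fun j' hj' F hF => mem_bI_of_fst hV ?_ hF) _ _
        rw [UpperSet.mem_Ici_iff] at hj'
        simp at hα ⊢
        nlinarith
      · push Not at hV
        obtain ⟨v, hv⟩ := hV
        have hg : 0 < γ.1 := by
          by_contra hn
          have hg0 : γ.1 = 0 := by omega
          simp [hg0] at hα
          omega
        refine step _ hv ⟨?_, ?_⟩ (Or.inl hg) (by simpa [pw_inl] using h2) ?_
        · simp [pw_inl] at hα ⊢; omega
        · simpa [pw_inl] using a2
        · simp [pw_inl] at hα ⊢; omega
    by_cases hβ : 0 < (s • γ + δ).2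
    · by_cases hV : ∀ i, Sum.inr i ∈ V
      · refine NP_van_zero (fun j' hj' F hF => mem_bI_of_snd hV ?_ hF) _ _
        rw [UpperSet.mem_Ici_iff] at hj'
        simp at hβ ⊢
        nlinarith
      · push Not at hV
        obtain ⟨v, hv⟩ := hV
        have hg : 0 < γ.2 := by
          by_contra hn
          have hg0 : γ.2 = 0 := by omega
          simp [hg0] at hβ
          omega
        refine step _ hv ⟨?_, ?_⟩ (by simpa [pw_inr] using h1) (Or.inl hg) ?_
        · simpa [pw_inr] using a1
        · simp [pw_inr] at hβ ⊢; omega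
        · simp [pw_inr] at hβ ⊢; omega
    refine hA V δ s (Prod.ext ?_ ?_) h1 h2 j hj
    · exact le_antisymm (not_lt.1 hα) h0.1
    · exact le_antisymm (not_lt.1 hβ) h0.2
  intro V δ s h0 h1 h2 j hj
  exact hB _ V δ s h0 h1 h2 rfl j hj

/-- The untruncated module `P(δ)`. -/
lemma NP_van_full {i : ℕ} {δ : ℤ × ℤ} {s j : ℤ} (h0 : 0 ≤ s • γ + δ) (h1 : 0 < γ.1 ∨ δ.1 = 0)
    (h2 : 0 < γ.2 ∨ δ.2 = 0) (hj : i + s < j) :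
    (NP hγ (⊥ : Ideal (PR K n r)) δ ⊥).Van i j := by
  have hbot : bI K (∅ : Finset (Fin n ⊕ Fin r)) = ⊥ := by simp [bI]
  have hγ1 : 0 ≤ γ.1 := hγ.1.1
  have hγ2 : 0 ≤ γ.2 := hγ.1.2
  have hγ3 : 0 < γ.1 + γ.2 := by
    by_contra h
    exact hγ.2 ⟨by simp; omega, by simp; omega⟩
  obtain ⟨N, hN⟩ : ∃ N, (s • γ + δ).1.toNat + (s • γ + δ).2.toNat = N := ⟨_, rfl⟩
  induction N using Nat.strong_induction_on generalizing s with
  | _ N IH =>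
  by_cases hs : 0 ≤ (s - 1) • γ + δ
  · refine IH _ ?_ hs (by omega) rfl
    have a1 := hs.1; have a2 := hs.2; have b1 := h0.1; have b2 := h0.2
    simp at a1 a2 b1 b2 hN ⊢
    have e1 : (s - 1) * γ.1 = s * γ.1 - γ.1 := by ring
    have e2 : (s - 1) * γ.2 = s * γ.2 - γ.2 := by ring
    rw [e1] at a1 ⊢
    rw [e2] at a2 ⊢
    omega
  · rw [← hbot]
    refine NP_van_trunc (T' := UpperSet.Ici s) (fun _ _ => by simp) ?_
      (NP_van_vars i ∅ δ s h0 h1 h2 j hj)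
    intro j _ hj' hc
    rw [UpperSet.mem_Ici_iff, not_le] at hj'
    apply hs
    have c1 := hc.1; have c2 := hc.2
    refine ⟨?_, ?_⟩
    · simp at c1 ⊢; nlinarith
    · simp at c2 ⊢; nlinarith

end Claim

end Stmt16

namespace Stmt16

open MvPolynomial

/-! ### Ideals of minors -/

section Minors

variable {R : Type u} [CommRing R] (fx t : ℕ → R)

/-- The `2 × 2` minors of the matrix with rows `fx` and `t`. -/
def mm (i j : ℕ) : R := fx i * t j - fx j * t i

/-- The ideal generated by the first `l` columns. -/
def cI (l : ℕ) : Ideal R := Ideal.span {x | ∃ i, i < l ∧ (x = fx i ∨ x = t i)}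

/-- The ideal generated by the first `a` columns, the minors of the columns `a, …, k - 1`, and
the minors of the columns `i, k` with `a ≤ i < l`. -/
def JJ (a k l : ℕ) : Ideal R :=
  cI fx t a ⊔ Ideal.span {x | ∃ i j, a ≤ i ∧ i < j ∧ (j < k ∨ j = k ∧ i < l) ∧ x = mm fx t i j}

variable {fx t}

lemma fx_mem_cI {i l : ℕ} (h : i < l) : fx i ∈ cI fx t l :=
  Ideal.subset_span ⟨i, h, Or.inl rfl⟩

lemma t_mem_cI {i l : ℕ} (h : i < l) : t i ∈ cI fx t l :=
  Ideal.subset_span ⟨i, h, Or.inr rfl⟩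

lemma mm_mem_JJ {a k l i j : ℕ} (h1 : a ≤ i) (h2 : i < j) (h3 : j < k ∨ j = k ∧ i < l) :
    mm fx t i j ∈ JJ fx t a k l :=
  Ideal.mem_sup_right (Ideal.subset_span ⟨i, j, h1, h2, h3, rfl⟩)

lemma cI_le_JJ {a k l : ℕ} : cI fx t a ≤ JJ fx t a k l := le_sup_left

lemma JJ_le {a k l : ℕ} {J : Ideal R} (h1 : ∀ i, i < a → fx i ∈ J) (h2 : ∀ i, i < a → t i ∈ J)
    (h3 : ∀ i j, a ≤ i → i < j → (j < k ∨ j = k ∧ i < l) → mm fx t i j ∈ J) :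
    JJ fx t a k l ≤ J := by
  refine sup_le (Ideal.span_le.2 ?_) (Ideal.span_le.2 ?_)
  · rintro x ⟨i, hi, rfl | rfl⟩
    exacts [h1 i hi, h2 i hi]
  · rintro x ⟨i, j, hi, hij, hj, rfl⟩
    exact h3 i j hi hij hj

lemma cI_mono {a b : ℕ} (h : a ≤ b) : cI fx t a ≤ cI fx t b :=
  Ideal.span_mono fun _ ⟨i, hi, hx⟩ => ⟨i, by omega, hx⟩

lemma JJ_base {a k : ℕ} (h : k ≤ a + 1) : JJ fx t a k 0 = cI fx t a := by
  refine le_antisymm (JJ_le (fun i h => fx_mem_cI h) (fun i h => t_mem_cI h) ?_) cI_le_JJ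
  intro i j _ _ _
  omega

lemma JJ_start {a k : ℕ} : JJ fx t a k a = JJ fx t a k 0 := by
  refine le_antisymm ?_ ?_ <;>
  refine JJ_le (fun i h => cI_le_JJ (fx_mem_cI h)) (fun i h => cI_le_JJ (t_mem_cI h)) ?_ <;>
  exact fun i j h1 h2 h3 => mm_mem_JJ h1 h2 (by omega)

lemma JJ_end {a k : ℕ} : JJ fx t a k k = JJ fx t a (k + 1) 0 := by
  refine le_antisymm ?_ ?_ <;>
  refine JJ_le (fun i h => cI_le_JJ (fx_mem_cI h)) (fun i h => cI_le_JJ (t_mem_cI h)) ?_ <;>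
  exact fun i j h1 h2 h3 => mm_mem_JJ h1 h2 (by omega)

lemma JJ_succ {a k l : ℕ} (hal : a ≤ l) (hlk : l < k) :
    JJ fx t a k (l + 1) = JJ fx t a k l ⊔ Ideal.span {mm fx t l k} := by
  refine le_antisymm (JJ_le (fun i h => ?_) (fun i h => ?_) ?_) (sup_le (JJ_le ?_ ?_ ?_) ?_)
  · exact Ideal.mem_sup_left (cI_le_JJ (fx_mem_cI h))
  · exact Ideal.mem_sup_left (cI_le_JJ (t_mem_cI h))
  · intro i j h1 h2 h3
    by_cases h : j = k ∧ i = l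
    · rw [h.1, h.2]
      exact Ideal.mem_sup_right (Ideal.mem_span_singleton_self _)
    · exact Ideal.mem_sup_left (mm_mem_JJ h1 h2 (by omega))
  · exact fun i h => cI_le_JJ (fx_mem_cI h)
  · exact fun i h => cI_le_JJ (t_mem_cI h)
  · exact fun i j h1 h2 h3 => mm_mem_JJ h1 h2 (by omega)
  · rw [Ideal.span_singleton_le_iff_mem]
    exact mm_mem_JJ hal hlk (by omega)

/-- The colon ideal `J(a,k,l) : m_{lk}`; one inclusion is the Plücker relation, the other the
regularity of `m_{lk}` modulo `J(l,k)`. -/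
lemma JJ_colon {a k l : ℕ} (hal : a ≤ l) (hlk : l < k)
    (hn : ∀ g, mm fx t l k * g ∈ JJ fx t l k 0 → g ∈ JJ fx t l k 0) (g : R) :
    mm fx t l k * g ∈ JJ fx t a k l ↔ g ∈ JJ fx t l k 0 := by
  constructor
  · intro h
    refine hn g (JJ_le (fun i h => ?_) (fun i h => ?_) (fun i j h1 h2 h3 => ?_) h)
    · exact cI_le_JJ (fx_mem_cI (by omega))
    · exact cI_le_JJ (t_mem_cI (by omega))
    · by_cases hi : i < l
      · exact cI_le_JJ (sub_mem (Ideal.mul_mem_right _ _ (fx_mem_cI hi))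
          (Ideal.mul_mem_left _ _ (t_mem_cI hi)))
      · exact mm_mem_JJ (by omega) h2 (by omega)
  · intro h
    have hle : JJ fx t l k 0 ≤ Submodule.comap (LinearMap.mulLeft R (mm fx t l k)) (JJ fx t a k l) := by
      refine JJ_le (fun i hi => ?_) (fun i hi => ?_) (fun i j h1 h2 h3 => ?_)
      · change mm fx t l k * fx i ∈ JJ fx t a k l
        by_cases hia : i < a
        · exact Ideal.mul_mem_left _ _ (cI_le_JJ (fx_mem_cI hia))
        · rw [show mm fx t l k * fx i = fx l * mm fx t i k - fx k * mm fx t i l by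
            simp only [mm]; ring]
          exact sub_mem (Ideal.mul_mem_left _ _ (mm_mem_JJ (by omega) (by omega) (by omega)))
            (Ideal.mul_mem_left _ _ (mm_mem_JJ (by omega) (by omega) (by omega)))
      · change mm fx t l k * t i ∈ JJ fx t a k l
        by_cases hia : i < a
        · exact Ideal.mul_mem_left _ _ (cI_le_JJ (t_mem_cI hia))
        · rw [show mm fx t l k * t i = t l * mm fx t i k - t k * mm fx t i l by
            simp only [mm]; ring]
          exact sub_mem (Ideal.mul_mem_left _ _ (mm_mem_JJ (by omega) (by omega) (by omega)))
            (Ideal.mul_mem_left _ _ (mm_mem_JJ (by omega) (by omega) (by omega)))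
      · exact Ideal.mul_mem_left _ _ (mm_mem_JJ (by omega) h2 (by omega))
    exact hle h

lemma cI_zero : cI fx t 0 = ⊥ := by simp [cI]

lemma cI_succ (l : ℕ) : cI fx t (l + 1) = cI fx t l ⊔ Ideal.span {fx l} ⊔ Ideal.span {t l} := by
  refine le_antisymm (Ideal.span_le.2 ?_) (sup_le (sup_le (cI_mono (by omega)) ?_) ?_)
  · rintro x ⟨i, hi, hx⟩
    rcases Nat.lt_succ_iff_lt_or_eq.1 hi with h | rfl
    · exact Ideal.mem_sup_left (Ideal.mem_sup_left (Ideal.subset_span ⟨i, h, hx⟩))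
    · rcases hx with rfl | rfl
      · exact Ideal.mem_sup_left (Ideal.mem_sup_right (Ideal.mem_span_singleton_self _))
      · exact Ideal.mem_sup_right (Ideal.mem_span_singleton_self _)
  · rw [Ideal.span_singleton_le_iff_mem]; exact fx_mem_cI (by omega)
  · rw [Ideal.span_singleton_le_iff_mem]; exact t_mem_cI (by omega)

end Minors

/-! ### Reduction of the determinantal ring to twisted copies of the polynomial ring -/

section Bound

variable {K : Type u} [Field K] {n r : ℕ} {γ : ℤ × ℤ} (hγ : 0 < γ) (d : ℕ)

/-- Vanishing for `P/J` in position `i` follows from vanishing for `P(-pd,-q)` in the positions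
`i - i'`, where `p ≤ min i' κ` and `q ≤ i'`: a substitute for a bound on the shifts in a
resolution of `P/J` over `P`. -/
def PP (κ : ℕ) (J : Ideal (PR K n r)) : Prop :=
  ∀ (i : ℕ) (j : ℤ) (δ : ℤ × ℤ), (∀ i' p q : ℕ, i' ≤ i → p ≤ i' → p ≤ κ → q ≤ i' →
    (NP hγ (⊥ : Ideal (PR K n r)) (δ - (((p * d : ℕ) : ℤ), (q : ℤ))) ⊥).Van (i - i') j) →
    (NP hγ J δ ⊥).Van i j

variable {hγ d}

lemma PP_bot : PP (n := n) (r := r) (K := K) hγ d 0 ⊥ := by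
  intro i j δ h
  have := h 0 0 0 (by omega) (by omega) (by omega) (by omega)
  rwa [show δ - (((0 * d : ℕ) : ℤ), ((0 : ℕ) : ℤ)) = δ by ext <;> simp] at this

lemma PP_step {J0 J J1 : Ideal (PR K n r)} {v : PR K n r} {ε τ κ κ' κ'' : ℕ}
    (hε : ε ≤ 1) (hτ : τ ≤ 1)
    (hv : IsWeightedHomogeneous (pw n r) v (((ε * d : ℕ) : ℤ), (τ : ℤ)))
    (hJ : HomIdeal (pw n r) J) (h1 : J1 = J ⊔ Ideal.span {v}) (h0 : ∀ g, v * g ∈ J ↔ g ∈ J0)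
    (hP : PP hγ d κ J) (hP0 : PP hγ d κ' J0) (hκ : κ ≤ κ'') (hκ' : κ' + ε ≤ κ'') :
    PP hγ d κ'' J1 := by
  intro i j δ H
  refine (stepSES hv hJ h1 h0 δ _ rfl ⊥).van_right' ?_ ?_
  · exact hP i j δ fun i' p q a1 a2 a3 a4 => H i' p q a1 a2 (by omega) a4
  · rintro i rfl
    refine hP0 i j _ fun i' p q a1 a2 a3 a4 => ?_
    have := H (i' + 1) (p + ε) (q + τ) (by omega) (by omega) (by omega) (by omega)
    rw [Nat.add_sub_add_right] at this
    convert this using 2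
    ext
    · simp; ring
    · simp; ring

variable {fx t : ℕ → PR K n r}

lemma cI_hom {l : ℕ} (hfx : ∀ i < l, ∃ μ, IsWeightedHomogeneous (pw n r) (fx i) μ)
    (ht : ∀ i < l, ∃ μ, IsWeightedHomogeneous (pw n r) (t i) μ) :
    HomIdeal (pw n r) (cI fx t l) :=
  homIdeal_span _ (by
    rintro v ⟨i, hi, rfl | rfl⟩
    exacts [hfx i hi, ht i hi])

/-- The key estimate for the determinantal ring. -/
lemma PP_JJ (hfx : ∀ i < r, IsWeightedHomogeneous (pw n r) (fx i) ((d : ℤ), 0))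
    (ht : ∀ i < r, IsWeightedHomogeneous (pw n r) (t i) (0, 1))
    (nf : ∀ l < r, ∀ g, fx l * g ∈ cI fx t l → g ∈ cI fx t l)
    (nt : ∀ l < r, ∀ g, t l * g ∈ cI fx t l ⊔ Ideal.span {fx l} →
      g ∈ cI fx t l ⊔ Ideal.span {fx l})
    (nm : ∀ l k, l < k → k < r → ∀ g, mm fx t l k * g ∈ JJ fx t l k 0 → g ∈ JJ fx t l k 0) :
    ∀ k, k + 1 ≤ r → ∀ a, a ≤ k → PP hγ d k (JJ fx t a (k + 1) 0) := by
  have hmm : ∀ i j, i < r → j < r → IsWeightedHomogeneous (pw n r) (mm fx t i j) ((d : ℤ), 1) := by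
    intro i j hi hj
    have h1 := (hfx i hi).mul (ht j hj)
    have h2 := (hfx j hj).mul (ht i hi)
    simp only [Prod.mk_add_mk, add_zero, zero_add] at h1 h2
    exact h1.sub h2
  have hcI : ∀ l, l ≤ r → HomIdeal (pw n r) (cI fx t l) := fun l hl =>
    cI_hom (fun i hi => ⟨_, hfx i (by omega)⟩) (fun i hi => ⟨_, ht i (by omega)⟩)
  have hJJ : ∀ a k l, k < r → HomIdeal (pw n r) (JJ fx t a k l) ∨ r ≤ a := by
    intro a k l hk
    by_cases ha : r ≤ a
    · exact Or.inr ha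
    refine Or.inl ((hcI a (by omega)).sup (homIdeal_span _ ?_))
    rintro v ⟨i, j, h1, h2, h3, rfl⟩
    exact ⟨_, hmm i j (by omega) (by omega)⟩
  have hc : ∀ l, l ≤ r → PP hγ d l (cI fx t l) := by
    intro l
    induction l with
    | zero => intro _; rw [cI_zero]; exact PP_bot
    | succ l ih =>
      intro hl
      have s1 : PP hγ d (l + 1) (cI fx t l ⊔ Ideal.span {fx l}) :=
        PP_step (ε := 1) (τ := 0) le_rfl (by omega) (by simpa using hfx l (by omega))
          (hcI l (by omega)) rfl
          (fun g => ⟨nf l (by omega) g, fun h => Ideal.mul_mem_left _ _ h⟩)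
          (ih (by omega)) (ih (by omega)) (by omega) le_rfl
      refine PP_step (ε := 0) (τ := 1) (by omega) le_rfl (by simpa using ht l (by omega))
        ((hcI l (by omega)).sup (homIdeal_span _ ?_)) (cI_succ l)
        (fun g => ⟨nt l (by omega) g, fun h => Ideal.mul_mem_left _ _ h⟩) s1 s1 le_rfl le_rfl
      rintro v rfl
      exact ⟨_, hfx l (by omega)⟩
  intro k
  induction k with
  | zero =>
    intro hk a ha
    obtain rfl : a = 0 := by omega
    rw [JJ_base (by omega)]
    exact hc 0 (by omega)
  | succ k ih =>
    intro hk a ha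
    by_cases hak : a = k + 1
    · rw [JJ_base (by omega), hak]
      exact hc (k + 1) (by omega)
    have key : ∀ l, l ≤ k + 1 - a → PP hγ d (k + 1) (JJ fx t a (k + 1) (a + l)) := by
      intro l
      induction l with
      | zero =>
        intro _
        rw [add_zero, JJ_start]
        intro i j δ H
        exact ih (by omega) a (by omega) i j δ
          fun i' p q a1 a2 a3 a4 => H i' p q a1 a2 (by omega) a4
      | succ l ihl =>
        intro hl
        refine PP_step (ε := 1) (τ := 1) le_rfl le_rfl
          (by simpa using hmm (a + l) (k + 1) (by omega) (by omega))
          ((hJJ a (k + 1) (a + l) (by omega)).resolve_right (by omega))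
          (JJ_succ (l := a + l) (by omega) (by omega))
          (JJ_colon (by omega) (by omega) (nm (a + l) (k + 1) (by omega) (by omega)))
          (ihl (by omega)) (ih (by omega) (a + l) (by omega)) le_rfl le_rfl
    have := key (k + 1 - a) le_rfl
    rw [show a + (k + 1 - a) = k + 1 by omega, JJ_end] at this
    exact this

end Bound

end Stmt16

namespace Stmt16

open MvPolynomial

/-! ### Regularity modulo ideals extended from the coefficients plus variables -/

section Coeff

variable {S : Type u} [CommRing S] {τ : Type}

/-- Membership in `𝔞 S[t] + (t_i : i ∈ V)` is tested on coefficients. -/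
lemma mem_map_C_sup {𝔞 : Ideal S} {V : Set τ} {F : MvPolynomial τ S} :
    F ∈ 𝔞.map C ⊔ Ideal.span (X '' V : Set (MvPolynomial τ S)) ↔
      ∀ m : τ →₀ ℕ, (∀ i ∈ V, m i = 0) → coeff m F ∈ 𝔞 := by
  classical
  constructor
  · intro hF
    obtain ⟨G, hG, H, hH, rfl⟩ := Submodule.mem_sup.1 hF
    intro m hm
    rw [coeff_add]
    refine add_mem (mem_map_C_iff.1 hG m) ?_
    rw [notMem_support_iff.1]
    · exact zero_mem _
    · intro hs
      obtain ⟨i, hi, hne⟩ := mem_ideal_span_X_image.1 hH m hs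
      exact hne (hm i hi)
  · intro h
    rw [F.as_sum]
    refine sum_mem fun m _ => ?_
    by_cases hm : ∀ i ∈ V, m i = 0
    · refine Ideal.mem_sup_left (mem_map_C_iff.2 fun m' => ?_)
      rw [coeff_monomial]
      split_ifs with h'
      · exact h m hm
      · exact zero_mem _
    · push Not at hm
      obtain ⟨i, hi, hne⟩ := hm
      refine Ideal.mem_sup_right (mem_ideal_span_X_image.2 fun m' hm' => ?_)
      rw [Finset.mem_singleton.1 (support_monomial_subset hm')]
      exact ⟨i, hi, hne⟩

lemma C_regular {𝔞 : Ideal S} {V : Set τ} {s : S} (hs : ∀ x, s * x ∈ 𝔞 → x ∈ 𝔞)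
    {F : MvPolynomial τ S} (h : C s * F ∈ 𝔞.map C ⊔ Ideal.span (X '' V : Set (MvPolynomial τ S))) :
    F ∈ 𝔞.map C ⊔ Ideal.span (X '' V : Set (MvPolynomial τ S)) := by
  rw [mem_map_C_sup] at h ⊢
  intro m hm
  have := h m hm
  rw [coeff_C_mul] at this
  exact hs _ this

lemma X_regular {𝔞 : Ideal S} {V : Set τ} {k : τ} (hk : k ∉ V)
    {F : MvPolynomial τ S} (h : X k * F ∈ 𝔞.map C ⊔ Ideal.span (X '' V : Set (MvPolynomial τ S))) :
    F ∈ 𝔞.map C ⊔ Ideal.span (X '' V : Set (MvPolynomial τ S)) := by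
  classical
  rw [mem_map_C_sup] at h ⊢
  intro m hm
  have := h (Finsupp.single k 1 + m) fun i hi => by
    have : k ≠ i := by rintro rfl; exact hk hi
    simp [this, hm i hi]
  rwa [coeff_X_mul] at this

end Coeff

section Regular

variable {K : Type u} [Field K] {n r : ℕ} (f : Fin r → MvPolynomial (Fin n) K)

/-- The sequence `f`, continued by zeros. -/
noncomputable def fN (i : ℕ) : MvPolynomial (Fin n) K := if h : i < r then f ⟨i, h⟩ else 0

/-- The sequence `f` in the larger polynomial ring. -/
noncomputable def fx (i : ℕ) : PR K n r := rename Sum.inl (fN f i)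

/-- The variables `t_i`, continued by zeros. -/
noncomputable def tt (K : Type u) [Field K] (n r : ℕ) (i : ℕ) : PR K n r :=
  if h : i < r then X (Sum.inr ⟨i, h⟩) else 0

/-- The ideal `(f_i : i < a) + (t_i : i < q)` of the larger polynomial ring. -/
noncomputable def eI (a q : ℕ) : Ideal (PR K n r) :=
  Ideal.span {x | ∃ i, i < a ∧ x = fx f i} ⊔ Ideal.span {x | ∃ i, i < q ∧ x = tt K n r i}

/-- Regularity of the sequence `f`, as a statement about membership. -/
def RegSeq : Prop := ∀ i, i < r → ∀ x, fN f i * x ∈ Ideal.span {y | ∃ j, j < i ∧ y = fN f j} →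
  x ∈ Ideal.span {y | ∃ j, j < i ∧ y = fN f j}

variable {f}

lemma regSeq_of_isRegular
    (h : RingTheory.Sequence.IsRegular (MvPolynomial (Fin n) K) (List.ofFn f)) : RegSeq f := by
  intro i hi x hx
  have h1 := h.toIsWeaklyRegular.regular_mod_prev i (by simpa using hi)
  have hI : (Ideal.ofList ((List.ofFn f).take i) • ⊤ : Submodule (MvPolynomial (Fin n) K)
      (MvPolynomial (Fin n) K)) = Ideal.span {y | ∃ j, j < i ∧ y = fN f j} := by
    rw [smul_eq_mul, Ideal.mul_top, Ideal.ofList]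
    congr 1
    ext y
    simp only [Set.mem_ofPred_eq, List.mem_take_iff_getElem]
    constructor
    · rintro ⟨j, hj, rfl⟩
      simp at hj
      refine ⟨j, hj.1, ?_⟩
      simp [fN, hj.2]
    · rintro ⟨j, hj, rfl⟩
      refine ⟨j, by simp; omega, ?_⟩
      simp [fN, show j < r by omega]
  rw [hI] at h1
  refine (isSMulRegular_quotient_iff_mem_of_smul_mem _ _).1 h1 x ?_
  simpa [fN, hi] using hx

/-- The larger polynomial ring as polynomials in the `t_i` over `S`. -/
noncomputable def thetaHom (K : Type u) [Field K] (n r : ℕ) :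
    PR K n r →ₐ[K] MvPolynomial (Fin r) (MvPolynomial (Fin n) K) :=
  aeval (Sum.elim (fun i => C (X i)) X)

/-- The inverse of `thetaHom`. -/
noncomputable def psiHom (K : Type u) [Field K] (n r : ℕ) :
    MvPolynomial (Fin r) (MvPolynomial (Fin n) K) →+* PR K n r :=
  eval₂Hom (rename (R := K) (Sum.inl : Fin n → Fin n ⊕ Fin r)).toRingHom (fun i => X (Sum.inr i))

lemma psi_theta (F : PR K n r) : psiHom K n r (thetaHom K n r F) = F := by
  have : (psiHom K n r).comp (thetaHom K n r).toRingHom = RingHom.id _ := by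
    refine MvPolynomial.ringHom_ext ?_ ?_
    · intro a
      have : (algebraMap K (MvPolynomial (Fin r) (MvPolynomial (Fin n) K))) a = C (C a) := rfl
      simp [psiHom, thetaHom, this]
    · rintro (i | i) <;> simp [psiHom, thetaHom]
  exact DFunLike.congr_fun this F

lemma theta_rename (s : MvPolynomial (Fin n) K) :
    thetaHom K n r (rename Sum.inl s) = C s := by
  have : (thetaHom K n r).toRingHom.comp (rename Sum.inl).toRingHom = C := by
    refine MvPolynomial.ringHom_ext ?_ ?_
    · intro a
      have : (algebraMap K (MvPolynomial (Fin r) (MvPolynomial (Fin n) K))) a = C (C a) := rfl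
      simp [thetaHom, this]
    · intro i; simp [thetaHom]
  exact DFunLike.congr_fun this s

lemma mem_eI_iff {a q : ℕ} {F : PR K n r} :
    F ∈ eI f a q ↔ thetaHom K n r F ∈ (Ideal.span {y | ∃ j, j < a ∧ y = fN f j}).map C ⊔
      Ideal.span (X '' {i : Fin r | (i : ℕ) < q} :
        Set (MvPolynomial (Fin r) (MvPolynomial (Fin n) K))) := by
  constructor
  · intro h
    have hle : eI f a q ≤ Ideal.comap (thetaHom K n r)
        ((Ideal.span {y | ∃ j, j < a ∧ y = fN f j}).map C ⊔
      Ideal.span (X '' {i : Fin r | (i : ℕ) < q} :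
        Set (MvPolynomial (Fin r) (MvPolynomial (Fin n) K)))) := by
      refine sup_le (Ideal.span_le.2 ?_) (Ideal.span_le.2 ?_)
      · rintro _ ⟨i, hi, rfl⟩
        rw [SetLike.mem_coe, Ideal.mem_comap, fx, theta_rename]
        exact Ideal.mem_sup_left (Ideal.mem_map_of_mem _ (Ideal.subset_span ⟨i, hi, rfl⟩))
      · rintro _ ⟨i, hi, rfl⟩
        rw [SetLike.mem_coe, Ideal.mem_comap, tt]
        split_ifs with h
        · refine Ideal.mem_sup_right (Ideal.subset_span ⟨⟨i, h⟩, hi, ?_⟩)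
          simp [thetaHom]
        · simp
    exact hle h
  · intro h
    have hle : ((Ideal.span {y | ∃ j, j < a ∧ y = fN f j}).map C ⊔
      Ideal.span (X '' {i : Fin r | (i : ℕ) < q} :
        Set (MvPolynomial (Fin r) (MvPolynomial (Fin n) K)))) ≤
        Ideal.comap (psiHom K n r) (eI f a q) := by
      rw [Ideal.map_span]
      refine sup_le (Ideal.span_le.2 ?_) (Ideal.span_le.2 ?_)
      · rintro _ ⟨_, ⟨i, hi, rfl⟩, rfl⟩
        refine Ideal.mem_sup_left (Ideal.subset_span ⟨i, hi, ?_⟩)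
        simp [psiHom, fx]
      · rintro _ ⟨i, hi, rfl⟩
        refine Ideal.mem_sup_right (Ideal.subset_span ⟨i, hi, ?_⟩)
        simp [psiHom, tt]
    have := hle h
    rwa [Ideal.mem_comap, psi_theta] at this

lemma eI_fx_regular (hf : RegSeq f) {a q : ℕ} (ha : a < r) {g : PR K n r}
    (h : fx f a * g ∈ eI f a q) : g ∈ eI f a q := by
  rw [mem_eI_iff] at h ⊢
  rw [map_mul, fx, theta_rename] at h
  exact C_regular (hf a ha) h

lemma eI_tt_regular {a q k : ℕ} (hk : k < r) (hqk : q ≤ k) {g : PR K n r}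
    (h : tt K n r k * g ∈ eI f a q) : g ∈ eI f a q := by
  rw [mem_eI_iff] at h ⊢
  rw [map_mul, tt, dif_pos hk] at h
  refine X_regular (k := ⟨k, hk⟩) ?_ (by simpa [thetaHom] using h)
  simpa using hqk

lemma cI_eq_eI (l : ℕ) : cI (fx f) (tt K n r) l = eI f l l := by
  refine le_antisymm (Ideal.span_le.2 ?_) (sup_le (Ideal.span_mono ?_) (Ideal.span_mono ?_))
  · rintro _ ⟨i, hi, rfl | rfl⟩
    · exact Ideal.mem_sup_left (Ideal.subset_span ⟨i, hi, rfl⟩)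
    · exact Ideal.mem_sup_right (Ideal.subset_span ⟨i, hi, rfl⟩)
  · rintro _ ⟨i, hi, rfl⟩; exact ⟨i, hi, Or.inl rfl⟩
  · rintro _ ⟨i, hi, rfl⟩; exact ⟨i, hi, Or.inr rfl⟩

lemma eI_succ_left (a q : ℕ) : eI f (a + 1) q = eI f a q ⊔ Ideal.span {fx f a} := by
  have : {x | ∃ i, i < a + 1 ∧ x = fx f i} = {x | ∃ i, i < a ∧ x = fx f i} ∪ {fx f a} := by
    ext x
    constructor
    · rintro ⟨i, hi, rfl⟩
      rcases Nat.lt_succ_iff_lt_or_eq.1 hi with h | rfl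
      · exact Or.inl ⟨i, h, rfl⟩
      · exact Or.inr rfl
    · rintro (⟨i, hi, rfl⟩ | rfl)
      · exact ⟨i, by omega, rfl⟩
      · exact ⟨a, by omega, rfl⟩
  rw [eI, this, Ideal.span_union, eI]
  ac_rfl

end Regular

end Stmt16

namespace Stmt16

open MvPolynomial

/-! ### The determinantal ideal as a kernel -/

section Ker

variable {K : Type u} [Field K] {n r : ℕ} (f : Fin r → MvPolynomial (Fin n) K) (l k : ℕ)

/-- The weight counting the variables `t_i` with `l ≤ i < k`. -/
def wN (n r l k : ℕ) : Fin n ⊕ Fin r → ℕ :=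
  Sum.elim (fun _ => 0) (fun i => if l ≤ (i : ℕ) ∧ (i : ℕ) < k then 1 else 0)

/-- The weight `wN` with integer values. -/
def wZ (n r l k : ℕ) : Fin n ⊕ Fin r → ℤ := fun i => (wN n r l k i : ℤ)

/-- The substitution `t_i ↦ f_i` for `l ≤ i < k`. -/
noncomputable def ev : PR K n r →ₐ[K] PR K n r :=
  aeval (Sum.elim (fun i => X (Sum.inl i))
    (fun i => if l ≤ (i : ℕ) ∧ (i : ℕ) < k then fx f i else X (Sum.inr i)))

/-- The ideal `(f_i : l ≤ i < k)`. -/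
noncomputable def iI : Ideal (PR K n r) := Ideal.span {x | ∃ i, (l ≤ i ∧ i < k) ∧ x = fx f i}

variable {f l k}

lemma weight_wZ (m : Fin n ⊕ Fin r →₀ ℕ) :
    Finsupp.weight (wZ n r l k) m = ((∑ i, m i * wN n r l k i : ℕ) : ℤ) := by
  rw [Finsupp.weight_apply, Finsupp.sum_fintype _ _ (by simp)]
  simp [wZ]

lemma wh_rename {M : Type} [AddCommGroup M] {w : Fin n ⊕ Fin r → M} (hw : ∀ i, w (Sum.inl i) = 0)
    (s : MvPolynomial (Fin n) K) : IsWeightedHomogeneous w (rename Sum.inl s) 0 := by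
  induction s using MvPolynomial.induction_on with
  | C a => rw [rename_C]; exact isWeightedHomogeneous_C w a
  | add p q hp hq => rw [map_add]; exact hp.add hq
  | mul_X p i hp =>
    rw [map_mul, rename_X]
    have := hp.mul (isWeightedHomogeneous_X K w (Sum.inl i : Fin n ⊕ Fin r))
    rwa [hw, add_zero] at this

lemma wh_fx (i : ℕ) : IsWeightedHomogeneous (wZ n r l k) (fx f i) 0 :=
  wh_rename (fun _ => rfl) _

lemma wh_tt_in {i : ℕ} (h1 : l ≤ i) (h2 : i < k) :
    IsWeightedHomogeneous (wZ n r l k) (tt K n r i) 1 := by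
  rw [tt]
  split_ifs with h
  · have := isWeightedHomogeneous_X K (wZ n r l k) (Sum.inr ⟨i, h⟩ : Fin n ⊕ Fin r)
    simpa [wZ, wN, h1, h2] using this
  · exact isWeightedHomogeneous_zero _ _ _

lemma wh_tt_out {i : ℕ} (h1 : ¬ (l ≤ i ∧ i < k)) :
    IsWeightedHomogeneous (wZ n r l k) (tt K n r i) 0 := by
  rw [tt]
  split_ifs with h
  · have := isWeightedHomogeneous_X K (wZ n r l k) (Sum.inr ⟨i, h⟩ : Fin n ⊕ Fin r)
    simpa [wZ, wN, h1] using this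
  · exact isWeightedHomogeneous_zero _ _ _

lemma ev_rename (s : MvPolynomial (Fin n) K) : ev f l k (rename Sum.inl s) = rename Sum.inl s := by
  have : (ev f l k).comp (rename Sum.inl) = rename Sum.inl := by
    refine MvPolynomial.algHom_ext fun i => ?_
    simp [ev]
  exact DFunLike.congr_fun this s

@[simp] lemma ev_fx (i : ℕ) : ev f l k (fx f i) = fx f i := ev_rename _

lemma ev_tt_in {i : ℕ} (h1 : l ≤ i) (h2 : i < k) : ev f l k (tt K n r i) = fx f i := by
  rw [tt]
  split_ifs with h
  · simp [ev, h1, h2]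
  · simp [fx, fN, h]

lemma ev_tt_out {i : ℕ} (h1 : ¬ (l ≤ i ∧ i < k)) : ev f l k (tt K n r i) = tt K n r i := by
  rw [tt]
  split_ifs with h
  · simp [ev, h1]
  · simp

lemma ev_ev {k' : ℕ} (hk : k ≤ k') (F : PR K n r) : ev f l k (ev f l k' F) = ev f l k' F := by
  have : (ev f l k).comp (ev f l k') = ev f l k' := by
    refine MvPolynomial.algHom_ext fun i => ?_
    rcases i with i | i
    · simp [ev]
    · by_cases h : l ≤ (i : ℕ) ∧ (i : ℕ) < k'
      · have e : ev f l k' (X (Sum.inr i)) = fx f i := by simp [ev, h]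
        rw [AlgHom.comp_apply, e, ev_fx]
      · have e : ev f l k' (X (Sum.inr i)) = X (Sum.inr i) := by simp [ev, h]
        have e' : ev f l k (X (Sum.inr i)) = X (Sum.inr i) := by
          have : ¬ (l ≤ (i : ℕ) ∧ (i : ℕ) < k) := by omega
          simp [ev, this]
        rw [AlgHom.comp_apply, e, e']
  exact DFunLike.congr_fun this F

lemma ev_ev' {k' : ℕ} (hk : k ≤ k') (F : PR K n r) : ev f l k' (ev f l k F) = ev f l k' F := by
  have : (ev f l k').comp (ev f l k) = ev f l k' := by
    refine MvPolynomial.algHom_ext fun i => ?_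
    rcases i with i | i
    · simp [ev]
    · by_cases h : l ≤ (i : ℕ) ∧ (i : ℕ) < k
      · have e : ev f l k (X (Sum.inr i)) = fx f i := by simp [ev, h]
        have e' : ev f l k' (X (Sum.inr i)) = fx f i := by
          have : l ≤ (i : ℕ) ∧ (i : ℕ) < k' := by omega
          simp [ev, this]
        rw [AlgHom.comp_apply, e, e', ev_fx]
      · have e : ev f l k (X (Sum.inr i)) = X (Sum.inr i) := by simp [ev, h]
        rw [AlgHom.comp_apply, e]
  exact DFunLike.congr_fun this F

lemma ev_mem_cI {F : PR K n r} (hF : F ∈ cI (fx f) (tt K n r) l) :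
    ev f l k F ∈ cI (fx f) (tt K n r) l := by
  have hle : cI (fx f) (tt K n r) l ≤ Ideal.comap (ev f l k) (cI (fx f) (tt K n r) l) := by
    refine Ideal.span_le.2 ?_
    rintro _ ⟨i, hi, rfl | rfl⟩
    · rw [SetLike.mem_coe, Ideal.mem_comap, ev_fx]; exact fx_mem_cI hi
    · rw [SetLike.mem_coe, Ideal.mem_comap, ev_tt_out (by omega)]; exact t_mem_cI hi
  exact hle hF

lemma ev_mem_of_JJ {F : PR K n r} (hF : F ∈ JJ (fx f) (tt K n r) l k 0) :
    ev f l k F ∈ cI (fx f) (tt K n r) l := by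
  have hle : JJ (fx f) (tt K n r) l k 0 ≤ Ideal.comap (ev f l k) (cI (fx f) (tt K n r) l) := by
    refine JJ_le (fun i hi => ev_mem_cI (fx_mem_cI hi)) (fun i hi => ev_mem_cI (t_mem_cI hi)) ?_
    intro i j h1 h2 h3
    rw [Ideal.mem_comap, mm, map_sub, map_mul, map_mul, ev_fx, ev_fx, ev_tt_in (by omega) (by omega),
      ev_tt_in (by omega) (by omega), mul_comm, sub_self]
    exact zero_mem _
  exact hle hF

lemma cI_sup_iI (hlk : l ≤ k) : cI (fx f) (tt K n r) l ⊔ iI f l k = eI f k l := by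
  rw [cI_eq_eI]
  refine le_antisymm (sup_le (sup_le_sup_right (Ideal.span_mono ?_) _)
    (le_sup_of_le_left (Ideal.span_mono ?_))) (sup_le (Ideal.span_le.2 ?_)
    (le_sup_of_le_left le_sup_right))
  · rintro _ ⟨i, hi, rfl⟩; exact ⟨i, by omega, rfl⟩
  · rintro _ ⟨i, hi, rfl⟩; exact ⟨i, by omega, rfl⟩
  · rintro _ ⟨i, hi, rfl⟩
    by_cases h : i < l
    · exact Ideal.mem_sup_left (Ideal.mem_sup_left (Ideal.subset_span ⟨i, h, rfl⟩))
    · exact Ideal.mem_sup_right (Ideal.subset_span ⟨i, ⟨by omega, hi⟩, rfl⟩)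

/-- A polynomial of weight `m` is sent into the `m`-th power of `(f_i : l ≤ i < k)`. -/
lemma ev_mem_pow {F : PR K n r} {m : ℕ} (hF : IsWeightedHomogeneous (wZ n r l k) F (m : ℤ)) :
    ev f l k F ∈ iI f l k ^ m := by
  rw [F.as_sum, map_sum]
  refine sum_mem fun e he => ?_
  have hw := hF (mem_support_iff.1 he)
  rw [weight_wZ] at hw
  have hw' : ∑ i, e i * wN n r l k i = m := by exact_mod_cast hw
  rw [ev, aeval_monomial, Finsupp.prod_fintype _ _ (by simp)]
  refine Ideal.mul_mem_left _ _ ?_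
  rw [← hw', ← Finset.prod_pow_eq_pow_sum]
  refine Ideal.prod_mem_prod fun i _ => ?_
  rcases i with i | i
  · simp [wN]
  · by_cases h : l ≤ (i : ℕ) ∧ (i : ℕ) < k
    · simp only [Sum.elim_inr, h, wN, mul_one, and_self, if_true]
      have hm : fx f i ∈ iI f l k := Ideal.subset_span ⟨i, h, rfl⟩
      exact Ideal.pow_mem_pow hm _
    · simp [wN, h]

/-- A polynomial of weight `0` is unchanged by the substitution. -/
lemma ev_eq_self {F : PR K n r} (hF : IsWeightedHomogeneous (wZ n r l k) F 0) :
    ev f l k F = F := by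
  have h1 : F = (AlgHom.id K (PR K n r)) F := rfl
  conv_rhs => rw [h1, ← aeval_X_left]
  refine MvPolynomial.eval₂Hom_congr' rfl ?_ rfl
  rintro (i | i) hi _
  · rfl
  · obtain ⟨e, he, hie⟩ := (mem_vars_iff_mem_support _).1 hi
    have hw := hF (mem_support_iff.1 he)
    rw [weight_wZ] at hw
    have hw' : ∑ i, e i * wN n r l k i = 0 := by exact_mod_cast hw
    have := (Finset.sum_eq_zero_iff.1 hw') (Sum.inr i) (Finset.mem_univ _)
    have h0 : e (Sum.inr i) ≠ 0 := Finsupp.mem_support_iff.1 hie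
    have hn : ¬ (l ≤ (i : ℕ) ∧ (i : ℕ) < k) := by
      intro h
      simp [wN, h, h0] at this
    simp [hn]

/-- The substitution makes every polynomial weight-zero. -/
lemma wh_ev {k' : ℕ} (hk : k ≤ k') (F : PR K n r) :
    IsWeightedHomogeneous (wZ n r l k) (ev f l k' F) 0 := by
  induction F using MvPolynomial.induction_on with
  | C a =>
    have : ev f l k' (C a) = C a := (ev f l k').commutes a
    rw [this]; exact isWeightedHomogeneous_C _ a
  | add p q hp hq => rw [map_add]; exact hp.add hq
  | mul_X p i hp =>
    rw [map_mul]
    have : IsWeightedHomogeneous (wZ n r l k) (ev f l k' (X i)) 0 := by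
      rcases i with i | i
      · have := wh_rename (K := K) (w := wZ n r l k) (fun _ => rfl) (X i)
        simpa [ev] using this
      · by_cases h : l ≤ (i : ℕ) ∧ (i : ℕ) < k'
        · have e : ev f l k' (X (Sum.inr i)) = fx f i := by simp [ev, h]
          rw [e]; exact wh_fx _
        · have e : ev f l k' (X (Sum.inr i)) = X (Sum.inr i) := by simp [ev, h]
          rw [e]
          have := isWeightedHomogeneous_X K (wZ n r l k) (Sum.inr i : Fin n ⊕ Fin r)
          rwa [show wZ n r l k (Sum.inr i) = 0 from ?_] at this
          have : ¬ (l ≤ (i : ℕ) ∧ (i : ℕ) < k) := by omega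
          simp [wZ, wN, this]
    simpa using hp.mul this

lemma mem_iI_iff {J : Ideal (PR K n r)} {x : PR K n r} (hx : x ∈ iI f l k * J) :
    ∃ z : ℕ → PR K n r, (∀ i, z i ∈ J) ∧ x = ∑ i ∈ Finset.Ico l k, fx f i * z i := by
  classical
  refine Submodule.mul_induction_on hx ?_ ?_
  · intro a ha b hb
    refine Submodule.span_induction (p := fun a _ => ∃ z : ℕ → PR K n r, (∀ i, z i ∈ J) ∧
      a * b = ∑ i ∈ Finset.Ico l k, fx f i * z i) ?_ ?_ ?_ ?_ ha
    · rintro _ ⟨i, hi, rfl⟩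
      refine ⟨fun j => if j = i then b else 0, fun j => ?_, ?_⟩
      · dsimp only
        split_ifs
        exacts [hb, zero_mem _]
      · simp [hi]
    · exact ⟨fun _ => 0, fun _ => zero_mem _, by simp⟩
    · rintro x y _ _ ⟨z, hz, e⟩ ⟨z', hz', e'⟩
      exact ⟨fun i => z i + z' i, fun i => add_mem (hz i) (hz' i), by
        simp [add_mul, e, e', mul_add, Finset.sum_add_distrib]⟩
    · rintro c x _ ⟨z, hz, e⟩
      refine ⟨fun i => c * z i, fun i => Ideal.mul_mem_left _ _ (hz i), ?_⟩
      rw [smul_eq_mul, mul_assoc, e, Finset.mul_sum]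
      exact Finset.sum_congr rfl fun i _ => by ring
  · rintro x y ⟨z, hz, e⟩ ⟨z', hz', e'⟩
    exact ⟨fun i => z i + z' i, fun i => add_mem (hz i) (hz' i), by
      simp [e, e', mul_add, Finset.sum_add_distrib]⟩

/-- Elements of the `m`-th power of `(f_i : l ≤ i < k)` lift to polynomials of weight `m`. -/
lemma exists_lift_pow {k' : ℕ} (hk : k ≤ k') (m : ℕ) : ∀ h ∈ iI f l k ^ m, ∃ H : PR K n r,
    IsWeightedHomogeneous (wZ n r l k) H (m : ℤ) ∧ IsWeightedHomogeneous (wZ n r l k') H (m : ℤ) ∧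
    ev f l k H = ev f l k' h ∧ ev f l k' H = ev f l k' h := by
  induction m with
  | zero =>
    intro h _
    exact ⟨ev f l k' h, by simpa using wh_ev hk h, by simpa using wh_ev le_rfl h, ev_ev hk h,
      ev_ev le_rfl h⟩
  | succ m ih =>
    intro h hh
    rw [pow_succ'] at hh
    obtain ⟨z, hz, rfl⟩ := mem_iI_iff hh
    choose H h1 h2 h3 h4 using fun i => ih (z i) (hz i)
    refine ⟨∑ i ∈ Finset.Ico l k, tt K n r i * H i, ?_, ?_, ?_, ?_⟩
    · refine IsWeightedHomogeneous.sum _ _ _ fun i hi => ?_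
      rw [Finset.mem_Ico] at hi
      have := (wh_tt_in (K := K) (n := n) (r := r) hi.1 hi.2).mul (h1 i)
      rwa [add_comm, ← Nat.cast_succ] at this
    · refine IsWeightedHomogeneous.sum _ _ _ fun i hi => ?_
      rw [Finset.mem_Ico] at hi
      have := (wh_tt_in (K := K) (n := n) (r := r) hi.1 (hi.2.trans_le hk)).mul (h2 i)
      rwa [add_comm, ← Nat.cast_succ] at this
    · rw [map_sum, map_sum]
      refine Finset.sum_congr rfl fun i hi => ?_
      rw [Finset.mem_Ico] at hi
      rw [map_mul, map_mul, ev_tt_in hi.1 hi.2, ev_fx, h3]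
    · rw [map_sum, map_sum]
      refine Finset.sum_congr rfl fun i hi => ?_
      rw [Finset.mem_Ico] at hi
      rw [map_mul, map_mul, ev_tt_in hi.1 (hi.2.trans_le hk), ev_fx, h4]

lemma cI_homZ : HomIdeal (wZ n r l k) (cI (fx f) (tt K n r) l) := by
  refine homIdeal_span _ ?_
  rintro v ⟨i, hi, rfl | rfl⟩
  · exact ⟨_, wh_fx i⟩
  · exact ⟨_, wh_tt_out (by omega)⟩

end Ker

end Stmt16

namespace Stmt16

open MvPolynomial

section Ker2

variable {K : Type u} [Field K] {n r : ℕ} {f : Fin r → MvPolynomial (Fin n) K} {l k : ℕ}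

lemma exists_split (hlk : l ≤ k) (hk : k < r) {F : PR K n r} {m : ℕ}
    (hF : IsWeightedHomogeneous (wZ n r l (k + 1)) F ((m + 1 : ℕ) : ℤ)) :
    ∃ F0 G : PR K n r, F = F0 + tt K n r k * G ∧
      IsWeightedHomogeneous (wZ n r l k) F0 ((m + 1 : ℕ) : ℤ) ∧
      ev f l (k + 1) F0 = ev f l k F0 ∧
      IsWeightedHomogeneous (wZ n r l (k + 1)) G (m : ℤ) := by
  set v : Fin n ⊕ Fin r := Sum.inr ⟨k, hk⟩ with hv
  have htt : tt K n r k = X v := by rw [tt, dif_pos hk]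
  have key : ∀ e, coeff e (F.modMonomial (Finsupp.single v 1)) ≠ 0 → e v = 0 ∧ coeff e F ≠ 0 := by
    intro e he
    by_cases hle : Finsupp.single v 1 ≤ e
    · exact absurd (coeff_modMonomial_of_le F hle) he
    · rw [coeff_modMonomial_of_not_le F hle] at he
      refine ⟨?_, he⟩
      rw [Finsupp.single_le_iff] at hle
      omega
  refine ⟨F.modMonomial (Finsupp.single v 1), F.divMonomial (Finsupp.single v 1), ?_, ?_, ?_, ?_⟩
  · rw [htt, modMonomial_add_divMonomial_single]
  · intro e he
    obtain ⟨h0, h1⟩ := key e he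
    rw [← hF h1, weight_wZ, weight_wZ]
    congr 1
    refine Finset.sum_congr rfl fun i _ => ?_
    rcases i with i | i
    · rfl
    · by_cases hi : (i : ℕ) = k
      · have : (Sum.inr i : Fin n ⊕ Fin r) = v := by rw [hv]; congr 1; exact Fin.ext hi
        rw [this, h0]; simp
      · have : (l ≤ (i : ℕ) ∧ (i : ℕ) < k) ↔ (l ≤ (i : ℕ) ∧ (i : ℕ) < k + 1) := by omega
        simp [wN, this]
  · refine MvPolynomial.eval₂Hom_congr' rfl ?_ rfl
    rintro (i | i) hi _
    · rfl
    · obtain ⟨e, he, hie⟩ := (mem_vars_iff_mem_support _).1 hi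
      have h0 := (key e (mem_support_iff.1 he)).1
      have hne : (i : ℕ) ≠ k := by
        intro h
        have : (Sum.inr i : Fin n ⊕ Fin r) = v := by rw [hv]; congr 1; exact Fin.ext h
        rw [this, Finsupp.mem_support_iff] at hie
        exact hie h0
      have : (l ≤ (i : ℕ) ∧ (i : ℕ) < k) ↔ (l ≤ (i : ℕ) ∧ (i : ℕ) < k + 1) := by omega
      simp [this]
  · intro e he
    rw [coeff_divMonomial] at he
    have := hF he
    rw [map_add, Finsupp.weight_single] at this
    have hw : wZ n r l (k + 1) v = 1 := by simp [wZ, wN, hv, hlk]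
    rw [hw] at this
    push_cast at this
    simp at this
    linarith

/-- The kernel of the substitution `t_i ↦ f_i`, `l ≤ i < k`, modulo the first `l` columns is
generated by minors. -/
def KER (f : Fin r → MvPolynomial (Fin n) K) (l k : ℕ) : Prop :=
  ∀ (m : ℕ) (F : PR K n r), IsWeightedHomogeneous (wZ n r l k) F (m : ℤ) →
    ev f l k F ∈ cI (fx f) (tt K n r) l → F ∈ JJ (fx f) (tt K n r) l k 0

lemma JJ_le_eI (hlk : l ≤ k) : JJ (fx f) (tt K n r) l k 0 ≤ eI f k l := by
  rw [← cI_sup_iI hlk]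
  refine JJ_le (fun i h => Ideal.mem_sup_left (fx_mem_cI h))
    (fun i h => Ideal.mem_sup_left (t_mem_cI h)) ?_
  intro i j h1 h2 h3
  refine Ideal.mem_sup_right (sub_mem (Ideal.mul_mem_right _ _ (Ideal.subset_span ?_))
    (Ideal.mul_mem_right _ _ (Ideal.subset_span ?_)))
  · exact ⟨i, by omega, rfl⟩
  · exact ⟨j, by omega, rfl⟩

/-- `f_k` is regular modulo the powers of `(f_l, …, f_{k-1})` and the first `l` columns. -/
lemma Q_of_KER (hf : RegSeq f) (hlk : l ≤ k) (hk : k < r) (hK : KER f l k) (m : ℕ) :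
    ∀ h : PR K n r, ev f l k h = h → fx f k * h ∈ cI (fx f) (tt K n r) l ⊔ iI f l k ^ m →
      h ∈ cI (fx f) (tt K n r) l ⊔ iI f l k ^ m := by
  induction m with
  | zero => intro h _ _; simp
  | succ m ih =>
    intro h hev hh
    have hh' : fx f k * h ∈ cI (fx f) (tt K n r) l ⊔ iI f l k ^ m :=
      (sup_le le_sup_left ((Ideal.pow_le_pow_right (Nat.le_succ m)).trans le_sup_right) :
        cI (fx f) (tt K n r) l ⊔ iI f l k ^ (m + 1) ≤ cI (fx f) (tt K n r) l ⊔ iI f l k ^ m) hh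
    obtain ⟨c, hc, h', hh'', rfl⟩ := Submodule.mem_sup.1 (ih h hev hh')
    obtain ⟨F, hF, -, hF1, -⟩ := exists_lift_pow le_rfl m h' hh''
    obtain ⟨c2, hc2, z, hz, hcz⟩ := Submodule.mem_sup.1 hh
    rw [pow_succ'] at hz
    obtain ⟨z, hzJ, rfl⟩ := mem_iI_iff hz
    choose H hH _ hH1 _ using fun i => exists_lift_pow (f := f) le_rfl m (z i) (hzJ i)
    have hin : fx f k * F - ∑ i ∈ Finset.Ico l k, fx f i * H i ∈ JJ (fx f) (tt K n r) l k 0 := by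
      refine hK m _ ?_ ?_
      · refine IsWeightedHomogeneous.sub ?_ (IsWeightedHomogeneous.sum _ _ _ fun i _ => ?_)
        · simpa using (wh_fx k).mul hF
        · simpa using (wh_fx i).mul (hH i)
      · have e1 : ev f l k (fx f k * F - ∑ i ∈ Finset.Ico l k, fx f i * H i)
            = ev f l k c2 - fx f k * ev f l k c := by
          have := congrArg (ev f l k) hcz
          simp only [map_add, map_mul, map_sum, ev_fx, map_sub, hH1, hF1] at this ⊢
          linear_combination -this
        rw [e1]
        exact sub_mem (ev_mem_cI hc2) (Ideal.mul_mem_left _ _ (ev_mem_cI hc))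
    have hFe : F ∈ eI f k l := by
      refine eI_fx_regular hf hk ?_
      have h2 : ∑ i ∈ Finset.Ico l k, fx f i * H i ∈ eI f k l := by
        rw [← cI_sup_iI hlk]
        refine sum_mem fun i hi => Ideal.mul_mem_right _ _ (Ideal.mem_sup_right
          (Ideal.subset_span ⟨i, by simpa using hi, rfl⟩))
      have := add_mem (JJ_le_eI hlk hin) h2
      simpa using this
    rw [← cI_sup_iI hlk] at hFe
    obtain ⟨c3, hc3, y, hy, hcy⟩ := Submodule.mem_sup.1 hFe
    rw [← Ideal.mul_top (iI f l k)] at hy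
    obtain ⟨y, -, rfl⟩ := mem_iI_iff hy
    have hcomp : F = weightedHomogeneousComponent (wZ n r l k) (m : ℤ) c3
        + ∑ i ∈ Finset.Ico l k, fx f i *
          weightedHomogeneousComponent (wZ n r l k) (m : ℤ) (y i) := by
      conv_lhs => rw [← hF.weightedHomogeneousComponent_same, ← hcy]
      rw [map_add, map_sum]
      congr 1
      refine Finset.sum_congr rfl fun i _ => ?_
      rw [whc_mul_left (wh_fx i), sub_zero]
    have hevF : ev f l k F ∈ cI (fx f) (tt K n r) l ⊔ iI f l k ^ (m + 1) := by
      rw [hcomp, map_add, map_sum]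
      refine add_mem (Ideal.mem_sup_left (ev_mem_cI (cI_homZ _ hc3 _)))
        (Ideal.mem_sup_right (sum_mem fun i hi => ?_))
      rw [map_mul, ev_fx, pow_succ']
      refine Ideal.mul_mem_mul (Ideal.subset_span ⟨i, by simpa using hi, rfl⟩) (ev_mem_pow ?_)
      exact weightedHomogeneousComponent_isWeightedHomogeneous (w := wZ n r l k) _ _
    rw [← hev, map_add, ← hF1]
    exact add_mem (Ideal.mem_sup_left (ev_mem_cI hc)) hevF

lemma JJ_mono_k {k' : ℕ} (h : k ≤ k') :
    JJ (fx f) (tt K n r) l k 0 ≤ JJ (fx f) (tt K n r) l k' 0 :=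
  JJ_le (fun _ h => cI_le_JJ (fx_mem_cI h)) (fun _ h => cI_le_JJ (t_mem_cI h))
    (fun _ _ h1 h2 _ => mm_mem_JJ h1 h2 (by omega))

theorem ker_eq (hf : RegSeq f) (l k : ℕ) (hlk : l ≤ k) (hk : k ≤ r) : KER f l k := by
  induction k, hlk using Nat.le_induction with
  | base =>
    intro m F hF hc
    have hF0 : IsWeightedHomogeneous (wZ n r l l) F 0 := by
      intro e _
      rw [weight_wZ]
      have : ∀ i, wN n r l l i = 0 := by
        rintro (i | i)
        · rfl
        · simp [wN]
      simp [this]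
    rw [ev_eq_self hF0] at hc
    exact cI_le_JJ hc
  | succ k hlk ih =>
    have ihk := ih (by omega)
    intro m
    induction m with
    | zero =>
      intro F hF hc
      rw [ev_eq_self (by simpa using hF)] at hc
      exact cI_le_JJ hc
    | succ m ihm =>
      intro F hF hc
      obtain ⟨F0, G, hFG, hF0, hev0, hG⟩ := exists_split (f := f) hlk (by omega) hF
      have hevF : ev f l (k + 1) F = ev f l k F0 + fx f k * ev f l (k + 1) G := by
        rw [hFG, map_add, map_mul, hev0, ev_tt_in hlk (by omega)]
      have hq : fx f k * ev f l (k + 1) G ∈ cI (fx f) (tt K n r) l ⊔ iI f l k ^ (m + 1) := by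
        rw [show fx f k * ev f l (k + 1) G = ev f l (k + 1) F - ev f l k F0 by rw [hevF]; ring]
        exact sub_mem (Ideal.mem_sup_left hc) (Ideal.mem_sup_right (ev_mem_pow hF0))
      obtain ⟨c, hcc, z, hz, hcz⟩ := Submodule.mem_sup.1
        (Q_of_KER hf hlk (by omega) ihk (m + 1) _ (ev_ev (by omega) G) hq)
      rw [pow_succ'] at hz
      obtain ⟨z, hzJ, rfl⟩ := mem_iI_iff hz
      choose H h1 h2 h3 h4 using fun i =>
        exists_lift_pow (f := f) (Nat.le_succ k) m (z i) (hzJ i)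
      have hcz' : ev f l (k + 1) c + ∑ i ∈ Finset.Ico l k, fx f i * ev f l (k + 1) (z i)
          = ev f l (k + 1) G := by
        have := congrArg (ev f l (k + 1)) hcz
        rw [ev_ev le_rfl] at this
        simpa only [map_add, map_sum, map_mul, ev_fx] using this
      have hevc := ev_mem_cI (k := k + 1) hcc
      have t1 : F0 + fx f k * ∑ i ∈ Finset.Ico l k, tt K n r i * H i ∈
          JJ (fx f) (tt K n r) l k 0 := by
        refine ihk (m + 1) _ (hF0.add ?_) ?_
        · have : IsWeightedHomogeneous (wZ n r l k) (∑ i ∈ Finset.Ico l k, tt K n r i * H i)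
              ((m + 1 : ℕ) : ℤ) := by
            refine IsWeightedHomogeneous.sum _ _ _ fun i hi => ?_
            rw [Finset.mem_Ico] at hi
            have := (wh_tt_in (K := K) (n := n) (r := r) hi.1 hi.2).mul (h1 i)
            rwa [add_comm, ← Nat.cast_succ] at this
          simpa using (wh_fx k).mul this
        · have e1 : ev f l k (F0 + fx f k * ∑ i ∈ Finset.Ico l k, tt K n r i * H i)
              = ev f l (k + 1) F - fx f k * ev f l (k + 1) c := by
            have : ev f l k (∑ i ∈ Finset.Ico l k, tt K n r i * H i)
                = ∑ i ∈ Finset.Ico l k, fx f i * ev f l (k + 1) (z i) := by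
              rw [map_sum]
              refine Finset.sum_congr rfl fun i hi => ?_
              rw [Finset.mem_Ico] at hi
              rw [map_mul, ev_tt_in hi.1 hi.2, h3]
            rw [map_add, map_mul, ev_fx, this, hevF, ← hcz']
            ring
          rw [e1]
          exact sub_mem hc (Ideal.mul_mem_left _ _ hevc)
      have t2 : G - ∑ i ∈ Finset.Ico l k, fx f i * H i ∈ JJ (fx f) (tt K n r) l (k + 1) 0 := by
        refine ihm _ (hG.sub (IsWeightedHomogeneous.sum _ _ _ fun i _ => ?_)) ?_
        · simpa using (wh_fx i).mul (h2 i)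
        · rw [map_sub, map_sum]
          simp only [map_mul, ev_fx, h4]
          rw [← hcz', add_sub_cancel_right]
          exact hevc
      have t3 : ∑ i ∈ Finset.Ico l k, mm (fx f) (tt K n r) i k * H i ∈
          JJ (fx f) (tt K n r) l (k + 1) 0 := by
        refine sum_mem fun i hi => Ideal.mul_mem_right _ _ ?_
        rw [Finset.mem_Ico] at hi
        exact mm_mem_JJ hi.1 hi.2 (by omega)
      have : F = (F0 + fx f k * ∑ i ∈ Finset.Ico l k, tt K n r i * H i)
          + tt K n r k * (G - ∑ i ∈ Finset.Ico l k, fx f i * H i)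
          + ∑ i ∈ Finset.Ico l k, mm (fx f) (tt K n r) i k * H i := by
        rw [hFG, mul_sub, Finset.mul_sum, Finset.mul_sum]
        have : ∑ i ∈ Finset.Ico l k, mm (fx f) (tt K n r) i k * H i
            = ∑ i ∈ Finset.Ico l k, tt K n r k * (fx f i * H i)
              - ∑ i ∈ Finset.Ico l k, fx f k * (tt K n r i * H i) := by
          rw [← Finset.sum_sub_distrib]
          exact Finset.sum_congr rfl fun i _ => by rw [mm]; ring
        rw [this]; ring
      rw [this]
      exact add_mem (add_mem (JJ_mono_k (Nat.le_succ k) t1) (Ideal.mul_mem_left _ _ t2)) t3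

lemma JJ_homZ : HomIdeal (wZ n r l k) (JJ (fx f) (tt K n r) l k 0) := by
  refine cI_homZ.sup (homIdeal_span _ ?_)
  rintro _ ⟨i, j, h1, h2, h3, rfl⟩
  refine ⟨1, IsWeightedHomogeneous.sub ?_ ?_⟩
  · simpa using (wh_fx (f := f) i).mul
      (wh_tt_in (K := K) (n := n) (r := r) (l := l) (k := k) (i := j) (by omega) (by omega))
  · simpa using (wh_fx (f := f) j).mul
      (wh_tt_in (K := K) (n := n) (r := r) (l := l) (k := k) (i := i) (by omega) (by omega))

lemma wZ_neg {m : ℤ} (hm : m < 0) (g : PR K n r) :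
    weightedHomogeneousComponent (wZ n r l k) m g = 0 := by
  ext e
  rw [coeff_weightedHomogeneousComponent, if_neg, coeff_zero]
  rw [weight_wZ]
  omega

/-- The minor `m_{lk}` is regular modulo the ideal generated by the first `l` columns and the
minors of the columns `l, …, k - 1`. -/
theorem mm_regular (hf : RegSeq f) (hlk : l < k) (hk : k < r) {g : PR K n r}
    (hg : mm (fx f) (tt K n r) l k * g ∈ JJ (fx f) (tt K n r) l k 0) :
    g ∈ JJ (fx f) (tt K n r) l k 0 := by
  have hcomp : ∀ m : ℕ, weightedHomogeneousComponent (wZ n r l k) (m : ℤ) g ∈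
      JJ (fx f) (tt K n r) l k 0 := by
    intro m
    have hstep : ∀ m : ℕ, weightedHomogeneousComponent (wZ n r l k) ((m : ℤ) - 1) g ∈
        JJ (fx f) (tt K n r) l k 0 → weightedHomogeneousComponent (wZ n r l k) (m : ℤ) g ∈
        JJ (fx f) (tt K n r) l k 0 := by
      intro m hm
      have h1 := JJ_homZ _ hg (m : ℤ)
      have w1 : IsWeightedHomogeneous (wZ n r l k) (fx f l * tt K n r k) 0 := by
        simpa using (wh_fx l).mul (wh_tt_out (l := l) (k := k) (by omega))
      have w2 : IsWeightedHomogeneous (wZ n r l k) (fx f k * tt K n r l) 1 := by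
        simpa using (wh_fx k).mul (wh_tt_in (l := l) (k := k) (by omega) (by omega))
      rw [mm, sub_mul, map_sub, whc_mul_left w1, whc_mul_left w2, sub_zero] at h1
      have h2 := add_mem h1 (Ideal.mul_mem_left _ (fx f k * tt K n r l) hm)
      rw [sub_add_cancel] at h2
      have h3 := ev_mem_of_JJ h2
      rw [map_mul, map_mul, ev_fx, ev_tt_out (by omega), cI_eq_eI, mul_assoc] at h3
      have h4 := eI_tt_regular hk hlk.le (eI_fx_regular hf (by omega) h3)
      rw [← cI_eq_eI] at h4
      refine ker_eq hf l k hlk.le hk.le m _ ?_ h4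
      exact weightedHomogeneousComponent_isWeightedHomogeneous (w := wZ n r l k) _ _
    induction m with
    | zero => exact hstep 0 (by rw [wZ_neg (by simp)]; exact zero_mem _)
    | succ m ih => exact hstep (m + 1) (by simpa using ih)
  rw [← finsum_weightedHomogeneousComponent (wZ n r l k) g]
  refine finsum_induction (· ∈ JJ (fx f) (tt K n r) l k 0) (zero_mem _) (fun _ _ => add_mem) ?_
  intro m
  rcases lt_or_ge m 0 with h | h
  · rw [wZ_neg h]; exact zero_mem _
  · obtain ⟨m, rfl⟩ := Int.eq_ofNat_of_zero_le h
    exact hcomp m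

/-- The bound on the shifts for the determinantal ideal of all columns. -/
theorem PP_all {γ : ℤ × ℤ} (hγ : 0 < γ) (hf : RegSeq f) {d : ℕ}
    (hfd : ∀ i, (f i).IsHomogeneous d) (hr : 1 ≤ r) :
    PP hγ d (r - 1) (JJ (fx f) (tt K n r) 0 r 0) := by
  have := PP_JJ (hγ := hγ) (d := d) (fx := fx f) (t := tt K n r) ?_ ?_ ?_ ?_ ?_ (r - 1)
    (by omega) 0 (by omega)
  · rwa [Nat.sub_add_cancel hr] at this
  · intro i hi e he
    rw [fx] at he
    obtain ⟨e', rfl, he'⟩ := coeff_rename_ne_zero _ _ _ he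
    rw [fN, dif_pos hi] at he'
    have h1 := hfd ⟨i, hi⟩ he'
    rw [← h1]
    simp only [Finsupp.weight_apply]
    rw [Finsupp.sum_mapDomain_index (by simp) (by intros; simp [add_smul])]
    simp [pw_inl, Finsupp.sum, Prod.ext_iff, Prod.fst_sum, Prod.snd_sum]
  · intro i hi
    rw [tt, dif_pos hi]
    have := isWeightedHomogeneous_X K (pw n r) (Sum.inr ⟨i, hi⟩ : Fin n ⊕ Fin r)
    simpa [pw_inr] using this
  · intro l hl g hg
    rw [cI_eq_eI] at hg ⊢
    exact eI_fx_regular hf hl hg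
  · intro l hl g hg
    rw [cI_eq_eI, ← eI_succ_left] at hg ⊢
    exact eI_tt_regular hl le_rfl hg
  · intro l k h1 h2 g hg
    exact mm_regular hf h1 h2 hg

end Ker2

end Stmt16

namespace Stmt16

/-! ### Linearity of a minimal resolution from vanishing of homology -/

section Linear

variable {K : Type u} [Field K] {B : Type u} [CommRing B] [Algebra K B] (A : StdGrading K B)

lemma gr_mul {i j : ℤ} {a b : B} (ha : a ∈ A.gr i) (hb : b ∈ A.gr j) : a * b ∈ A.gr (i + j) := by
  rcases lt_or_ge i 0 with hi | hi
  · rw [A.negBot i hi, Submodule.mem_bot] at ha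
    rw [ha, zero_mul]; exact zero_mem _
  rcases lt_or_ge j 0 with hj | hj
  · rw [A.negBot j hj, Submodule.mem_bot] at hb
    rw [hb, mul_zero]; exact zero_mem _
  rw [← A.mulEq i j hi hj]
  exact Submodule.mul_mem_mul ha hb

lemma one_mem_gr : (1 : B) ∈ A.gr 0 := by
  rw [A.zeroEq]; exact Submodule.mem_span_singleton_self _

/-- The projection onto the component of degree `j`. -/
noncomputable def cmp (j : ℤ) : B →ₗ[K] B := by
  classical
  letI := A.internal.chooseDecomposition
  exact (A.gr j).subtype ∘ₗ DirectSum.component K ℤ _ j ∘ₗ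
    (DirectSum.decomposeLinearEquiv A.gr).toLinearMap

lemma cmp_mem (j : ℤ) (x : B) : cmp A j x ∈ A.gr j := by
  simp [cmp]

lemma cmp_same {j : ℤ} {x : B} (hx : x ∈ A.gr j) : cmp A j x = x := by
  classical
  let _ := A.internal.chooseDecomposition
  exact DirectSum.decompose_of_mem_same A.gr hx

lemma cmp_ne {i j : ℤ} {x : B} (hx : x ∈ A.gr i) (h : i ≠ j) : cmp A j x = 0 := by
  classical
  let _ := A.internal.chooseDecomposition
  exact DirectSum.decompose_of_mem_ne A.gr hx h

lemma exists_decomp (x : B) : ∃ y : ℤ →₀ B, (∀ j, y j ∈ A.gr j) ∧ y.sum (fun _ m => m) = x := by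
  have hx : x ∈ iSup A.gr := by rw [A.internal.submodule_iSup_eq_top]; trivial
  obtain ⟨y, hy, e⟩ := (Submodule.mem_iSup_iff_exists_finsupp _ _).1 hx
  exact ⟨y, hy, e⟩

lemma cmp_max {x : B} (hx : x ∈ A.maxIdeal) : cmp A 0 x = 0 := by
  have key : ∀ a : B, cmp A 0 (a * x) = 0 := by
    refine Submodule.span_induction (p := fun x _ => ∀ a : B, cmp A 0 (a * x) = 0) ?_ ?_ ?_ ?_ hx
    · rintro x ⟨i, hi, hx⟩ a
      obtain ⟨y, hy, rfl⟩ := exists_decomp A a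
      rw [Finsupp.sum, Finset.sum_mul, map_sum]
      refine Finset.sum_eq_zero fun j _ => ?_
      rcases lt_or_ge j 0 with hj | hj
      · have := hy j
        rw [A.negBot j hj, Submodule.mem_bot] at this
        rw [this, zero_mul, map_zero]
      · exact cmp_ne A (gr_mul A (hy j) hx) (by omega)
    · simp
    · intro x y _ _ hx hy a
      rw [mul_add, map_add, hx, hy, add_zero]
    · intro c x _ hx a
      rw [smul_eq_mul, ← mul_assoc, hx]
  simpa using key 1

lemma one_notMem_max [Nontrivial B] : (1 : B) ∉ A.maxIdeal := by
  intro h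
  have := cmp_max A h
  rw [cmp_same A (one_mem_gr A)] at this
  exact one_ne_zero this

lemma gr_le_max {j : ℤ} (hj : 0 < j) {x : B} (hx : x ∈ A.gr j) : x ∈ A.maxIdeal :=
  Ideal.subset_span ⟨j, hj, hx⟩

lemma resGr_eq_zero {j : ℤ} (hj : j ≠ 0) {m : B ⧸ A.maxIdeal} (hm : m ∈ resGr A j) : m = 0 := by
  obtain ⟨x, hx, rfl⟩ := hm
  rcases lt_or_gt_of_ne hj with h | h
  · have hx' : x ∈ A.gr j := hx
    rw [A.negBot j h, Submodule.mem_bot] at hx'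
    rw [hx', map_zero]
  · exact (Submodule.Quotient.mk_eq_zero _).2 (gr_le_max A h hx)

/-- The homogeneous pieces of `B` as additive subgroups. -/
def bg (j : ℤ) : AddSubgroup B := (A.gr j).toAddSubgroup

/-- The sum of homogeneous elements of distinct degrees has the expected components. -/
def Indep {M : Type u} [AddCommGroup M] (g : ℤ → AddSubgroup M) : Prop :=
  ∀ (y : ℤ →₀ M) (j : ℤ), (∀ i, y i ∈ g i) → y.sum (fun _ m => m) ∈ g j →
    y.sum (fun _ m => m) = y j

variable {A}

/-- The homogeneous pieces of a free module as additive subgroups. -/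
noncomputable def fg (A : StdGrading K B) (β : ℕ → ℤ → ℕ) (k : ℕ) (j : ℤ) : AddSubgroup (FreeMod B β k) :=
  (freeGr A β k j).toAddSubgroup

variable {β : ℕ → ℤ → ℕ} {k : ℕ}

lemma mem_fg {j : ℤ} {x : FreeMod B β k} : x ∈ fg A β k j ↔ ∀ p, x p ∈ A.gr (j - p.1) := Iff.rfl

lemma fg_smul (i j : ℤ) (a : B) (m : FreeMod B β k) (ha : a ∈ bg A i) (hm : m ∈ fg A β k j) :
    a • m ∈ fg A β k (i + j) := fun p => by
  have := gr_mul A ha (hm p)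
  rw [Finsupp.smul_apply, smul_eq_mul]
  convert this using 2
  ring

lemma single_mem_fg {j : ℤ} (q : (j : ℤ) × Fin (β k j)) {a : B} (ha : a ∈ A.gr (j - q.1)) :
    (Finsupp.single q a : FreeMod B β k) ∈ fg A β k j := fun p => by
  classical
  rw [Finsupp.single_apply]
  split_ifs with h
  · rw [← h]; exact ha
  · exact zero_mem _

lemma fg_indep : Indep (fg A β k) := by
  classical
  intro y j hy hj
  ext p
  have h1 := cmp_same A (hj p)
  rw [← h1, Finsupp.sum, Finsupp.finsetSum_apply, map_sum]
  rw [Finset.sum_eq_single j]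
  · exact cmp_same A (hy j p)
  · intro i _ hi
    exact cmp_ne A (hy i p) (by omega)
  · intro h
    rw [Finsupp.notMem_support_iff.1 h]; simp

lemma fg_exists_decomp (x : FreeMod B β k) :
    ∃ y : ℤ →₀ FreeMod B β k, (∀ j, y j ∈ fg A β k j) ∧ y.sum (fun _ m => m) = x := by
  classical
  induction x using Finsupp.induction_linear with
  | zero => exact ⟨0, fun j => zero_mem _, by simp⟩
  | add x x' hx hx' =>
    obtain ⟨y, hy, rfl⟩ := hx
    obtain ⟨y', hy', rfl⟩ := hx'
    refine ⟨y + y', fun j => add_mem (hy j) (hy' j), ?_⟩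
    exact Finsupp.sum_add_index' (fun _ => rfl) (fun _ _ _ => rfl)
  | single q a =>
    obtain ⟨y, hy, rfl⟩ := exists_decomp A a
    refine ⟨∑ i ∈ y.support, Finsupp.single (i + q.1) (Finsupp.single q (y i)), ?_, ?_⟩
    · intro j
      rw [Finsupp.finsetSum_apply]
      refine sum_mem fun i _ => ?_
      rw [Finsupp.single_apply]
      split_ifs with h
      · refine single_mem_fg q ?_
        rw [← h, add_sub_cancel_right]; exact hy i
      · exact zero_mem _
    · rw [← Finsupp.sum_finsetSum_index (fun _ => rfl) (fun _ _ _ => rfl)]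
      simp only [Finsupp.sum_single_index]
      rw [Finsupp.sum, Finsupp.single_finsetSum]

variable {X : Ix.{u}} (C : RC X B (bg A))

/-- A surjective graded map from a free module onto a graded module whose homogeneous pieces
are independent is surjective on homogeneous pieces. -/
lemma exists_homog_lift {M : Type u} [AddCommGroup M] {g : ℤ → AddSubgroup M} (hI : Indep g)
    (ψ : FreeMod B β k →+ M) (hψ : Function.Surjective ψ)
    (hg : ∀ j, ∀ x ∈ fg A β k j, ψ x ∈ g j) {j : ℤ} {m : M} (hm : m ∈ g j) :
    ∃ x ∈ fg A β k j, ψ x = m := by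
  obtain ⟨x, rfl⟩ := hψ m
  obtain ⟨y, hy, rfl⟩ := fg_exists_decomp (A := A) x
  refine ⟨y j, hy j, ?_⟩
  have e : (y.mapRange ψ (map_zero ψ)).sum (fun _ m => m) = ψ (y.sum fun _ m => m) := by
    rw [Finsupp.sum_mapRange_index (fun _ => rfl), Finsupp.sum, Finsupp.sum, map_sum]
  have := hI (y.mapRange ψ (map_zero ψ)) j (fun i => by simpa using hg i _ (hy i))
    (by rw [e]; exact hm)
  rw [e] at this
  simpa using this.symm

lemma bg_smul (i j : ℤ) (a m : B) (ha : a ∈ bg A i) (hm : m ∈ bg A j) :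
    a • m ∈ bg A (i + j) := gr_mul A ha hm

/-- `B` as a coefficient object. -/
noncomputable abbrev bO : GMod.{u, u} X := C.toG B (bg A) bg_smul

/-- A free module as a coefficient object. -/
noncomputable abbrev fO (β : ℕ → ℤ → ℕ) (k : ℕ) : GMod.{u, u} X :=
  C.toG (FreeMod B β k) (fg A β k) fg_smul

variable {C}

lemma fO_van {i : ℕ} {j : ℤ} (hβ : ∀ l : ℤ, (k : ℤ) < l → β k l = 0)
    (hB : ∀ j' : ℤ, j - k ≤ j' → (bO C).Van i j') : (fO C β k).Van i j := by
  classical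
  intro x hx hc
  let pr (p : (j : ℤ) × Fin (β k j)) : (fO C β k).M →+ (bO C).M := Finsupp.applyAddHom p
  let inc (p : (j : ℤ) × Fin (β k j)) : (bO C).M →+ (fO C β k).M := Finsupp.singleAddHom p
  have hpr : ∀ p, GMod.IsMor (fO C β k) (bO C) (pr p) := by
    intro p i b m b'
    simp [pr]
  have hinc : ∀ p, GMod.IsMor (bO C) (fO C β k) (inc p) := by
    intro p i b m b'
    simp [inc]
  have h1 : ∀ p : (j : ℤ) × Fin (β k j), ∃ y ∈ (bO C).Hm (i + 1) (j - p.1),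
      (bO C).d i y = GMod.ext (pr p) i x := by
    intro p
    have hp : p.1 ≤ k := by
      by_contra hlt
      have := hβ p.1 (by omega)
      have h2 := p.2.2
      omega
    refine hB (j - p.1) (by omega) _ ?_ ((hpr p).cyc hc)
    intro b
    have := hx b p
    simp only [GMod.ext, Finsupp.mapRange.addMonoidHom_apply, Finsupp.mapRange_apply]
    rw [show j - p.1 - X.deg i b = j - X.deg i b - p.1 by ring]
    exact this
  choose y hy hyd using h1
  let T : Finset ((j : ℤ) × Fin (β k j)) :=
    x.support.biUnion (fun b => Finsupp.support (x b : FreeMod B β k))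
  refine ⟨∑ p ∈ T, GMod.ext (inc p) (i + 1) (y p), sum_mem fun p _ => ?_, ?_⟩
  · intro b
    simp only [GMod.ext, Finsupp.mapRange.addMonoidHom_apply, Finsupp.mapRange_apply]
    refine single_mem_fg p ?_
    have := hy p b
    rw [show j - p.1 - X.deg (i + 1) b = j - X.deg (i + 1) b - p.1 by ring] at this
    exact this
  · rw [map_sum]
    simp only [(hinc _).d_ext, hyd]
    ext1 b
    rw [Finsupp.finsetSum_apply]
    simp only [GMod.ext, Finsupp.mapRange.addMonoidHom_apply, Finsupp.mapRange_apply]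
    have hT : Finsupp.support (x b : FreeMod B β k) ⊆ T := by
      intro p hp
      refine Finset.mem_biUnion.2 ⟨b, ?_, hp⟩
      rw [Finsupp.mem_support_iff]
      intro h0
      rw [h0] at hp
      simp at hp
    have := Finsupp.sum_single (x b : FreeMod B β k)
    rw [Finsupp.sum_of_support_subset _ hT _ (by simp)] at this
    exact this

section Syzygies

variable (F : MinFreeRes A (resGr A) β)

/-- The homogeneous pieces of the image of a differential. -/
noncomputable def wg (k : ℕ) (j : ℤ) : AddSubgroup (LinearMap.range (F.d k)) :=
  (fg A β k j).comap (LinearMap.range (F.d k)).subtype.toAddMonoidHom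

lemma mem_wg {j : ℤ} {x : LinearMap.range (F.d k)} :
    x ∈ wg F k j ↔ (x : FreeMod B β k) ∈ fg A β k j := Iff.rfl

lemma wg_smul (i j : ℤ) (a : B) (m : LinearMap.range (F.d k)) (ha : a ∈ bg A i)
    (hm : m ∈ wg F k j) : a • m ∈ wg F k (i + j) := fg_smul i j a _ ha hm

lemma wg_indep : Indep (wg F k) := by
  intro y j hy hj
  have e : (y.mapRange (fun x : LinearMap.range (F.d k) => (x : FreeMod B β k)) rfl).sum
      (fun _ m => m) = ((y.sum fun _ m => m : LinearMap.range (F.d k)) : FreeMod B β k) := by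
    rw [Finsupp.sum_mapRange_index (fun _ => rfl), Finsupp.sum, Finsupp.sum,
      AddSubmonoidClass.coe_finsetSum]
  have := fg_indep (A := A) (β := β) (k := k)
    (y.mapRange (fun x : LinearMap.range (F.d k) => (x : FreeMod B β k)) rfl) j
    (fun i => hy i) (by rw [e]; exact hj)
  rw [e] at this
  exact Subtype.ext this

/-- The image of a differential as a coefficient object. -/
noncomputable abbrev wO (C : RC X B (bg A)) (k : ℕ) : GMod.{u, u} X :=
  C.toG (LinearMap.range (F.d k)) (wg F k) (wg_smul F)

variable {M : Type u} [AddCommGroup M] [Module B M] {g : ℤ → AddSubgroup M}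
  (hg : ∀ i j r m, r ∈ bg A i → m ∈ g j → r • m ∈ g (i + j))

/-- The short exact sequence `0 → im d_k → F_k → M → 0`. -/
noncomputable def sesF (C : RC X B (bg A)) (hI : Indep g) (ψ : FreeMod B β k →ₗ[B] M)
    (hψ : Function.Surjective ψ) (hex : Function.Exact (F.d k) ψ)
    (hψg : ∀ j, ∀ x ∈ fg A β k j, ψ x ∈ g j) :
    GMod.SES (wO F C k) (fO C β k) (C.toG M g hg) where
  φ := (LinearMap.range (F.d k)).subtype.toAddMonoidHom
  ψ := ψ.toAddMonoidHom
  morφ _ _ _ _ := by simp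
  morψ _ _ _ _ := by simp
  gφ _ _ hm := hm
  gψ := hψg
  zero _ m _ := (hex _).2 m.2
  inj _ _ _ h := Subtype.ext h
  exact _ m hm h := ⟨⟨m, (hex m).1 h⟩, hm, rfl⟩
  surj _ _ hm := exists_homog_lift hI ψ.toAddMonoidHom hψ hψg hm

/-- A basis element of a free module in the resolution is not a boundary modulo `𝔪`. -/
lemma basis_notMem [Nontrivial B] (q : (j : ℤ) × Fin (β k j)) (x : FreeMod B β k)
    (hx : ∀ p, x p ∈ A.maxIdeal) (h : Finsupp.single q 1 - x ∈ LinearMap.range (F.d k)) :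
    False := by
  obtain ⟨y, hy⟩ := h
  have h1 := F.minimal k y q
  rw [hy, Finsupp.sub_apply, Finsupp.single_eq_same] at h1
  refine one_notMem_max A ?_
  simpa using add_mem h1 (hx q)

lemma step [Nontrivial B] {pt : X.ι 0} (hpt : X.deg 0 pt = 0) (hpt' : ∀ b, b = pt)
    (hdeg : ∀ b, 1 ≤ X.deg 1 b) {N : ℕ}
    (hB : ∀ (i : ℕ) (j : ℤ), i < N → (i : ℤ) + 1 < j → (bO C).Van i j)
    (hI : Indep g) (ψ : FreeMod B β k →ₗ[B] M)
    (hψ : Function.Surjective ψ) (hex : Function.Exact (F.d k) ψ)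
    (hψg : ∀ j, ∀ x ∈ fg A β k j, ψ x ∈ g j)
    (hM : ∀ (i : ℕ) (j : ℤ), i + k ≤ N → (i + k : ℤ) < j → (C.toG M g hg).Van i j) :
    (k ≤ N → ∀ j : ℤ, (k : ℤ) < j → β k j = 0) ∧
    ∀ (i : ℕ) (j : ℤ), i + (k + 1) ≤ N → (i + (k + 1 : ℕ) : ℤ) < j → (wO F C k).Van i j := by
  have h1 : k ≤ N → ∀ j : ℤ, (k : ℤ) < j → β k j = 0 := by
    intro hk j hj
    by_contra hne
    let q : (j : ℤ) × Fin (β k j) := ⟨j, ⟨0, Nat.pos_of_ne_zero hne⟩⟩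
    have hq : (Finsupp.single q 1 : FreeMod B β k) ∈ fg A β k j :=
      single_mem_fg q (by rw [sub_self]; exact one_mem_gr A)
    obtain ⟨y, -, hy⟩ := hM 0 j (by omega) (by simpa using hj)
      (Finsupp.single pt (ψ (Finsupp.single q 1))) (by
        classical
        intro b
        rw [hpt' b, Finsupp.single_eq_same, hpt, sub_zero]
        exact hψg j _ hq) trivial
    choose z hz using fun b => hψ (y b : M)
    have e1 := DFunLike.congr_fun hy pt
    have e2 : (C.toG M g hg).d 0 y = ∑ b ∈ y.support, (C.toG M g hg).act 0 b (y b) := by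
      simp [GMod.d, Finsupp.liftAddHom_apply, Finsupp.sum]
    rw [e2, Finsupp.single_eq_same, Finsupp.finsetSum_apply] at e1
    refine basis_notMem F q (∑ b ∈ y.support, C.D 0 b pt • z b) ?_ ?_
    · intro p
      rw [Finsupp.finsetSum_apply]
      refine sum_mem fun b _ => ?_
      rw [Finsupp.smul_apply, smul_eq_mul]
      refine Ideal.mul_mem_right _ _ ?_
      have := C.homog 0 b pt
      rw [hpt, sub_zero] at this
      exact gr_le_max A (lt_of_lt_of_le one_pos (hdeg b)) this
    · refine (hex _).1 ?_
      rw [map_sub, map_sum, sub_eq_zero, ← e1]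
      refine Finset.sum_congr rfl fun b _ => ?_
      rw [map_smul, hz]
      rfl
  refine ⟨h1, fun i j hi hj => ?_⟩
  push_cast at hj
  refine (sesF F hg C hI ψ hψ hex hψg).van_left (hM (i + 1) j (by omega) (by push_cast; omega)) ?_
  exact fO_van (h1 (by omega)) fun j' hj' => hB i j' (by omega) (by omega)

/-- The homogeneous pieces of the residue field as additive subgroups. -/
def rg (A : StdGrading K B) (j : ℤ) : AddSubgroup (B ⧸ A.maxIdeal) := (resGr A j).toAddSubgroup

lemma rg_smul (i j : ℤ) (a : B) (m : B ⧸ A.maxIdeal) (ha : a ∈ bg A i) (hm : m ∈ rg A j) :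
    a • m ∈ rg A (i + j) := by
  obtain ⟨x, hx, rfl⟩ := hm
  exact ⟨a * x, gr_mul A ha hx, rfl⟩

lemma rg_indep : Indep (rg A) := by
  intro y j hy hj
  have h0 : ∀ i, i ≠ 0 → y i = 0 := fun i hi => resGr_eq_zero A hi (hy i)
  have hs : y.sum (fun _ m => m) = y 0 := by
    rw [Finsupp.sum, Finset.sum_eq_single 0 (fun i _ hi => h0 i hi)]
    exact fun h => Finsupp.notMem_support_iff.1 h
  by_cases hj0 : j = 0
  · rw [hj0, hs]
  · rw [h0 j hj0]
    exact resGr_eq_zero A hj0 hj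

/-- Linear vanishing for the residue field and almost linear vanishing for `B` force the
minimal resolution of the residue field to be linear. -/
theorem linear_of_van [Nontrivial B] (F : MinFreeRes A (resGr A) β) {pt : X.ι 0} (hpt : X.deg 0 pt = 0) (hpt' : ∀ b, b = pt)
    (hdeg : ∀ b, 1 ≤ X.deg 1 b) {N : ℕ}
    (hB : ∀ (i : ℕ) (j : ℤ), i < N → (i : ℤ) + 1 < j → (bO C).Van i j)
    (hK : ∀ (i : ℕ) (j : ℤ), (i : ℤ) < j → (C.toG (B ⧸ A.maxIdeal) (rg A) rg_smul).Van i j)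
    (k : ℕ) (hk : k ≤ N) (j : ℤ) (hj : j ≠ k) : β k j = 0 := by
  have hup : ∀ k : ℕ, (k ≤ N → ∀ j : ℤ, (k : ℤ) < j → β k j = 0) ∧
      ∀ (i : ℕ) (j : ℤ), i + (k + 1) ≤ N → (i + (k + 1 : ℕ) : ℤ) < j → (wO F C k).Van i j := by
    intro k
    induction k with
    | zero =>
      exact step F rg_smul hpt hpt' hdeg hB rg_indep F.eps F.eps_surjective F.exact_eps
        F.graded_eps (fun i j _ h => hK i j (by simpa using h))
    | succ k ih =>
      refine step F (wg_smul F) hpt hpt' hdeg hB (wg_indep F) (F.d k).rangeRestrict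
        (F.d k).surjective_rangeRestrict ?_ (fun j x hx => F.graded_d k j x hx) ih.2
      intro x
      rw [← F.exact_d k x]
      exact Subtype.ext_iff
  have hlow : ∀ k : ℕ, k ≤ N → ∀ j : ℤ, j < k → β k j = 0 := by
    intro k
    induction k with
    | zero =>
      intro _ j hj
      by_contra hne
      let q : (j : ℤ) × Fin (β 0 j) := ⟨j, ⟨0, Nat.pos_of_ne_zero hne⟩⟩
      refine basis_notMem F q 0 (fun p => by simp) ((F.exact_eps _).1 ?_)
      rw [sub_zero]
      refine resGr_eq_zero A (j := j) (by simp at hj; omega) (F.graded_eps j _ ?_)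
      exact single_mem_fg q (by rw [sub_self]; exact one_mem_gr A)
    | succ k ih =>
      intro hk j hj
      by_contra hne
      let q : (j : ℤ) × Fin (β (k + 1) j) := ⟨j, ⟨0, Nat.pos_of_ne_zero hne⟩⟩
      refine basis_notMem F q 0 (fun p => by simp) ((F.exact_d k _).1 ?_)
      rw [sub_zero]
      have hq := F.graded_d k j (Finsupp.single q 1)
        (single_mem_fg q (by rw [sub_self]; exact one_mem_gr A))
      ext p
      have hp : p.1 = k := by
        by_contra hpk
        have : β k p.1 = 0 := by
          rcases lt_or_gt_of_ne hpk with h | h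
          · exact ih (by omega) _ h
          · exact (hup k).1 (by omega) _ h
        have h2 := p.2.2
        omega
      have h3 := hq p
      rw [hp] at h3
      push_cast at hj
      rcases lt_or_eq_of_le (show j - k ≤ 0 by omega) with h | h
      · rw [A.negBot _ h, Submodule.mem_bot] at h3
        simpa using h3
      · rw [h] at h3
        rw [← cmp_same A h3, cmp_max A (F.minimal k _ p)]
        rfl
  rcases lt_or_gt_of_ne hj with h | h
  · exact hlow k hk j h
  · exact (hup k).1 hk j h

end Syzygies

end Linear

end Stmt16

namespace Stmt16

open MvPolynomial

/-! ### Vanishing for the diagonal subalgebra -/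

section Diag

variable {K : Type u} [Field K] {n r : ℕ} {f : Fin r → MvPolynomial (Fin n) K}

/-- The numerical conditions on `c` and `e` make every shift occurring in the filtration of the
determinantal ideal harmless. -/
lemma van_det {γ : ℤ × ℤ} (hγ : 0 < γ) {c e d : ℕ} (hγe : γ = ((c : ℤ), (e : ℤ)))
    (hf : RegSeq f) (hfd : ∀ i, (f i).IsHomogeneous d) (hre : r = 0 ∨ 1 ≤ e) (i : ℕ) (j : ℤ)
    (hp : ∀ p, p ≤ r - 1 → p ≤ i → p * d ≤ (p + 1) * c) (hj : (i : ℤ) + 1 < j) :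
    (NP hγ (JJ (fx f) (tt K n r) 0 r 0) 0 ⊥).Van i j := by
  rcases Nat.eq_zero_or_pos r with hr | hr
  · rw [JJ_base (by omega), cI_zero]
    exact NP_van_full (s := 0) (by simp) (Or.inr rfl) (Or.inr rfl) (by omega)
  · have he : 1 ≤ e := by omega
    refine PP_all hγ hf hfd hr i j 0 fun i' p q h1 h2 h3 h4 => ?_
    have h5 : ((p * d : ℕ) : ℤ) ≤ (i' + 1) * c := by
      have := hp p h3 (h2.trans h1)
      have h6 : p * d ≤ (i' + 1) * c := this.trans (Nat.mul_le_mul_right _ (by omega))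
      exact_mod_cast h6
    refine NP_van_full (s := i' + 1) ?_ ?_ ?_ (by omega)
    · subst hγe
      refine ⟨?_, ?_⟩
      · simp
        push_cast at h5
        linarith
      · simp
        have : (q : ℤ) ≤ i' := by exact_mod_cast h4
        have : (1 : ℤ) ≤ e := by exact_mod_cast he
        nlinarith
    · subst hγe
      rcases Nat.eq_zero_or_pos c with h | h
      · right
        subst h
        simp at h5 ⊢
        exact mul_eq_zero.1 (by exact_mod_cast le_antisymm h5 (by positivity))
      · left
        simpa using h
    · left
      subst hγe
      change (0 : ℤ) < e
      omega

/-- The substitution `t_i ↦ f_i` from `P` to `S`. -/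
noncomputable def phi (f : Fin r → MvPolynomial (Fin n) K) : PR K n r →ₐ[K] MvPolynomial (Fin n) K :=
  aeval (Sum.elim X f)

/-- The bihomogeneous piece `P_{(a,b)}`. -/
noncomputable def W (K : Type u) [Field K] (n r a b : ℕ) : Submodule K (PR K n r) :=
  weightedHomogeneousSubmodule K (pw n r) ((a : ℤ), (b : ℤ))

lemma mem_W {a b : ℕ} {F : PR K n r} :
    F ∈ W K n r a b ↔ IsWeightedHomogeneous (pw n r) F ((a : ℤ), (b : ℤ)) := Iff.rfl

lemma W_mul_le (a b a' b' : ℕ) : W K n r a b * W K n r a' b' ≤ W K n r (a + a') (b + b') := by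
  rw [Submodule.mul_le]
  intro F hF G hG
  have := IsWeightedHomogeneous.mul hF hG
  rw [mem_W]
  push_cast
  exact this

lemma W_le_of_monomial {a b : ℕ} {V : Submodule K (PR K n r)}
    (h : ∀ m : Fin n ⊕ Fin r →₀ ℕ, Finsupp.weight (pw n r) m = ((a : ℤ), (b : ℤ)) →
      monomial m (1 : K) ∈ V) : W K n r a b ≤ V := by
  intro F hF
  rw [F.as_sum]
  refine sum_mem fun m hm => ?_
  have := V.smul_mem (coeff m F) (h m (hF (mem_support_iff.1 hm)))
  rwa [smul_monomial, smul_eq_mul, mul_one] at this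

lemma W_zero : W K n r 0 0 = 1 := by
  refine le_antisymm (W_le_of_monomial fun m hm => ?_) ?_
  · have h1 := congrArg Prod.fst hm
    have h2 := congrArg Prod.snd hm
    rw [weight_pw_fst] at h1
    rw [weight_pw_snd] at h2
    have : m = 0 := by
      ext i
      rcases i with i | i
      · have := (Finset.sum_eq_zero_iff_of_nonneg (fun i _ => by positivity)).1 h1 i (Finset.mem_univ _)
        simpa using this
      · have := (Finset.sum_eq_zero_iff_of_nonneg (fun i _ => by positivity)).1 h2 i (Finset.mem_univ _)
        simpa using this
    rw [this]
    exact Submodule.one_le.1 le_rfl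
  · rw [Submodule.one_le, mem_W]
    exact isWeightedHomogeneous_one K _

lemma W_succ_left (a b : ℕ) : Submodule.span K (Set.range fun i => (X (Sum.inl i) : PR K n r)) * W K n r a b = W K n r (a + 1) b := by
  have h0 : Submodule.span K (Set.range fun i => (X (Sum.inl i) : PR K n r)) ≤ W K n r 1 0 := by
    rw [Submodule.span_le]
    rintro _ ⟨i, rfl⟩
    simpa [mem_W, pw_inl] using isWeightedHomogeneous_X K (pw n r) (Sum.inl i : Fin n ⊕ Fin r)
  refine le_antisymm ((mul_le_mul_left h0 _).trans
    ((W_mul_le _ _ _ _).trans_eq (by rw [add_comm 1 a, zero_add]))) ?_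
  refine W_le_of_monomial fun m hm => ?_
  have h1 := congrArg Prod.fst hm
  rw [weight_pw_fst] at h1
  obtain ⟨i, hi⟩ : ∃ i, m (Sum.inl i) ≠ 0 := by
    by_contra! hc
    simp [hc] at h1
    omega
  have hle : Finsupp.single (Sum.inl i) 1 ≤ m := by simpa using Nat.one_le_iff_ne_zero.2 hi
  have e : monomial m (1 : K) = X (Sum.inl i) * monomial (m - Finsupp.single (Sum.inl i) 1) 1 := by
    rw [X, monomial_mul, add_tsub_cancel_of_le hle, one_mul]
  rw [e]
  refine Submodule.mul_mem_mul (Submodule.subset_span ⟨i, rfl⟩) ?_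
  rw [mem_W]
  refine isWeightedHomogeneous_monomial _ _ _ ?_
  rw [← add_tsub_cancel_of_le hle, map_add, Finsupp.weight_single, pw_inl] at hm
  have := congrArg (fun z => z - ((1 : ℤ), (0 : ℤ))) hm
  simpa using this

lemma W_succ_right (a b : ℕ) : Submodule.span K (Set.range fun i => (X (Sum.inr i) : PR K n r)) * W K n r a b = W K n r a (b + 1) := by
  have h0 : Submodule.span K (Set.range fun i => (X (Sum.inr i) : PR K n r)) ≤ W K n r 0 1 := by
    rw [Submodule.span_le]
    rintro _ ⟨i, rfl⟩
    simpa [mem_W, pw_inr] using isWeightedHomogeneous_X K (pw n r) (Sum.inr i : Fin n ⊕ Fin r)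
  refine le_antisymm ((mul_le_mul_left h0 _).trans
    ((W_mul_le _ _ _ _).trans_eq (by rw [add_comm 1 b, zero_add]))) ?_
  refine W_le_of_monomial fun m hm => ?_
  have h1 := congrArg Prod.snd hm
  rw [weight_pw_snd] at h1
  obtain ⟨i, hi⟩ : ∃ i, m (Sum.inr i) ≠ 0 := by
    by_contra! hc
    simp [hc] at h1
    omega
  have hle : Finsupp.single (Sum.inr i) 1 ≤ m := by simpa using Nat.one_le_iff_ne_zero.2 hi
  have e : monomial m (1 : K) = X (Sum.inr i) * monomial (m - Finsupp.single (Sum.inr i) 1) 1 := by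
    rw [X, monomial_mul, add_tsub_cancel_of_le hle, one_mul]
  rw [e]
  refine Submodule.mul_mem_mul (Submodule.subset_span ⟨i, rfl⟩) ?_
  rw [mem_W]
  refine isWeightedHomogeneous_monomial _ _ _ ?_
  rw [← add_tsub_cancel_of_le hle, map_add, Finsupp.weight_single, pw_inr] at hm
  have := congrArg (fun z => z - ((0 : ℤ), (1 : ℤ))) hm
  simpa using this

lemma W_eq (a b : ℕ) : W K n r a b =
    Submodule.span K (Set.range fun i => (X (Sum.inl i) : PR K n r)) ^ a *
    Submodule.span K (Set.range fun i => (X (Sum.inr i) : PR K n r)) ^ b := by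
  induction a with
  | zero =>
    rw [pow_zero, one_mul]
    induction b with
    | zero => rw [pow_zero, W_zero]
    | succ b ih => rw [← W_succ_right, ih, pow_succ']
  | succ a ih => rw [← W_succ_left, ih, pow_succ', mul_assoc]

lemma W_pow (a b j : ℕ) : W K n r a b ^ j = W K n r (j * a) (j * b) := by
  rw [W_eq a b, W_eq (j * a), mul_pow, ← pow_mul, ← pow_mul, mul_comm a, mul_comm b]

lemma map_phi_W (a b : ℕ) : (W K n r a b).map (phi f).toLinearMap =
    homogeneousSubmodule (Fin n) K a * Submodule.span K (Set.range f) ^ b := by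
  rw [W_eq, Submodule.map_mul, Submodule.map_pow, Submodule.map_pow, Submodule.map_span,
    Submodule.map_span, ← Set.range_comp, ← Set.range_comp, ← homogeneousSubmodule_one_pow,
    homogeneousSubmodule_one_eq_span_X]
  congr 4 <;> ext i <;> simp [phi]

lemma mem_pow_span (e : ℕ) {h : MvPolynomial (Fin n) K} (hh : h ∈ Ideal.span (Set.range f) ^ e) :
    h ∈ (⊤ : Submodule K (MvPolynomial (Fin n) K)) * Submodule.span K (Set.range f) ^ e := by
  induction e generalizing h with
  | zero => simp
  | succ e ih =>
    rw [pow_succ] at hh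
    refine Submodule.mul_induction_on hh ?_ (fun _ _ => add_mem)
    intro a ha b hb
    have hb' : b ∈ (⊤ : Submodule K (MvPolynomial (Fin n) K)) * Submodule.span K (Set.range f) := by
      refine Submodule.span_induction ?_ (zero_mem _) (fun _ _ _ _ => add_mem) ?_ hb
      · intro x hx
        rw [← one_mul x]
        exact Submodule.mul_mem_mul trivial (Submodule.subset_span hx)
      · intro s x _ hx
        have := Submodule.mul_mem_mul (show s ∈ (⊤ : Submodule K (MvPolynomial (Fin n) K)) from trivial) hx
        rw [← mul_assoc] at this
        exact SetLike.le_def.1 (mul_le_mul_left le_top _) this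
    have := Submodule.mul_mem_mul (ih ha) hb'
    rw [mul_mul_mul_comm, ← pow_succ] at this
    exact SetLike.le_def.1 (mul_le_mul_left le_top _) this

/-- The generating space `(I^e)_{ed+c}` is the image of the bihomogeneous piece `P_{(c,e)}`. -/
lemma gen_eq {d : ℕ} (hfd : ∀ i, (f i).IsHomogeneous d) (c e : ℕ) :
    Submodule.restrictScalars K ((Ideal.span (Set.range f)) ^ e) ⊓
      homogeneousSubmodule (Fin n) K (e * d + c) = (W K n r c e).map (phi f).toLinearMap := by
  rw [map_phi_W]
  have hF : ∀ e, Submodule.span K (Set.range f) ^ e ≤ homogeneousSubmodule (Fin n) K (e * d) := by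
    intro e
    induction e with
    | zero =>
      rw [pow_zero, zero_mul, Submodule.one_le]
      exact isHomogeneous_one _ _
    | succ e ih =>
      rw [pow_succ, Submodule.mul_le]
      intro a ha b hb
      rw [add_mul, one_mul]
      refine IsHomogeneous.mul (ih ha) ?_
      have : Submodule.span K (Set.range f) ≤ homogeneousSubmodule (Fin n) K d := by
        rw [Submodule.span_le]
        rintro _ ⟨i, rfl⟩
        exact hfd i
      exact this hb
  refine le_antisymm ?_ ?_
  · rintro h ⟨h1, h2⟩
    have key : ∀ h ∈ (⊤ : Submodule K (MvPolynomial (Fin n) K)) * Submodule.span K (Set.range f) ^ e,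
        homogeneousComponent (e * d + c) h ∈
          homogeneousSubmodule (Fin n) K c * Submodule.span K (Set.range f) ^ e := by
      intro h hh
      refine Submodule.mul_induction_on hh ?_ ?_
      · intro s _ g hg
        rw [← sum_homogeneousComponent s, Finset.sum_mul, map_sum]
        refine sum_mem fun i _ => ?_
        have hi := homogeneousComponent_isHomogeneous i s
        rw [homogeneousComponent_of_mem (hi.mul (hF e hg))]
        split_ifs with hc
        · obtain rfl : i = c := by omega
          exact Submodule.mul_mem_mul hi hg
        · exact zero_mem _
      · intro x y hx hy
        rw [map_add]
        exact add_mem hx hy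
    have := key h (mem_pow_span e h1)
    rwa [homogeneousComponent_of_mem h2, if_pos rfl] at this
  · rw [Submodule.mul_le]
    intro a ha b hb
    refine ⟨Ideal.mul_mem_left _ _ ?_, ?_⟩
    · have : ∀ e, Submodule.span K (Set.range f) ^ e ≤
          Submodule.restrictScalars K ((Ideal.span (Set.range f)) ^ e) := by
        intro e
        induction e with
        | zero => simp
        | succ e ih =>
          rw [pow_succ, Submodule.mul_le]
          intro a ha b hb
          rw [Submodule.restrictScalars_mem, pow_succ]
          exact Ideal.mul_mem_mul (ih ha) (Submodule.span_le_restrictScalars K _ _ hb)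
      exact this e hb
    · rw [add_comm]
      exact IsHomogeneous.mul ha (hF e hb)

lemma gen_pow {d : ℕ} (hfd : ∀ i, (f i).IsHomogeneous d) (c e j : ℕ) :
    (Submodule.restrictScalars K ((Ideal.span (Set.range f)) ^ e) ⊓
      homogeneousSubmodule (Fin n) K (e * d + c)) ^ j =
      (W K n r (j * c) (j * e)).map (phi f).toLinearMap := by
  rw [gen_eq hfd, ← Submodule.map_pow, W_pow]

end Diag

end Stmt16

namespace Stmt16

open MvPolynomial

/-! ### Transfer to the algebra `B` -/

section Change

variable {X : Ix.{u}} {R : Type v} [CommRing R] {S : Type w} [CommRing S]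
  {B : Type w'} [CommRing B]

lemma mapRange_lc {α β : Type*} (g : R →+* S) (D : α → β →₀ R) (z : α →₀ R) :
    (Finsupp.linearCombination R D z).mapRange g (map_zero g) =
      Finsupp.linearCombination S (fun a => (D a).mapRange g (map_zero g))
        (z.mapRange g (map_zero g)) := by
  induction z using Finsupp.induction_linear with
  | zero => simp
  | add x y hx hy =>
    rw [map_add, Finsupp.mapRange_add (fun a b => map_add g a b), hx, hy,
      Finsupp.mapRange_add (fun a b => map_add g a b), map_add]
  | single a c =>
    ext b
    simp

/-- Base change of a complex along a ring homomorphism. -/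
noncomputable def RC.map {𝒜 : ℤ → AddSubgroup R} (C : RC X R 𝒜) (g : R →+* S)
    (𝒮 : ℤ → AddSubgroup S) (h : ∀ j, ∀ a ∈ 𝒜 j, g a ∈ 𝒮 j) : RC X S 𝒮 where
  D i b := (C.D i b).mapRange g (map_zero g)
  homog i b b' := h _ _ (C.homog i b b')
  sq i b := by
    rw [← mapRange_lc, C.sq]
    simp

lemma invFun_zero {ι : B →+* S} (hι : Function.Injective ι) : Function.invFun ι 0 = 0 := by
  rw [← map_zero ι]
  exact Function.leftInverse_invFun hι 0

/-- Descent of a complex to a subring containing the entries of its matrices. -/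
noncomputable def RC.descend {𝒮 : ℤ → AddSubgroup S} (C : RC X S 𝒮) (ι : B →+* S)
    (hι : Function.Injective ι) (ℬ : ℤ → AddSubgroup B)
    (h : ∀ j, ∀ s ∈ 𝒮 j, ∃ b ∈ ℬ j, ι b = s) : RC X B ℬ where
  D i b := (C.D i b).mapRange (Function.invFun ι) (invFun_zero hι)
  homog i b b' := by
    obtain ⟨x, hx, e⟩ := h _ _ (C.homog i b b')
    rw [Finsupp.mapRange_apply, ← e, Function.leftInverse_invFun hι]
    exact hx
  sq i b := by
    have hD : ∀ i b, ((C.D i b).mapRange (Function.invFun ι) (invFun_zero hι)).mapRange ι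
        (map_zero ι) = C.D i b := by
      intro i b
      ext b'
      obtain ⟨x, hx, e⟩ := h _ _ (C.homog i b b')
      rw [Finsupp.mapRange_apply, Finsupp.mapRange_apply, ← e, Function.leftInverse_invFun hι]
    apply Finsupp.mapRange_injective ι (map_zero ι) hι
    rw [mapRange_lc, hD]
    simp only [hD]
    rw [C.sq, Finsupp.mapRange_zero]

end Change

section Transfer

variable {K : Type u} [Field K] {n r : ℕ} {f : Fin r → MvPolynomial (Fin n) K}

lemma rename_phi (F : PR K n r) : rename Sum.inl (phi f F) = ev f 0 r F := by
  have : (rename Sum.inl).comp (phi f) = ev f 0 r := by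
    refine MvPolynomial.algHom_ext fun i => ?_
    rcases i with i | i
    · simp [phi, ev]
    · simp [phi, ev, fx, fN]
  exact DFunLike.congr_fun this F

/-- The kernel of the substitution `t_i ↦ f_i` on a diagonal piece is determinantal. -/
lemma phi_eq_zero_iff (hf : RegSeq f) {a : ℤ} {b : ℕ} {F : PR K n r}
    (hF : IsWeightedHomogeneous (pw n r) F (a, (b : ℤ))) :
    phi f F = 0 ↔ F ∈ JJ (fx f) (tt K n r) 0 r 0 := by
  constructor
  · intro h
    refine ker_eq hf 0 r (Nat.zero_le _) le_rfl b F ?_ ?_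
    · intro m hm
      have h1 := congrArg Prod.snd (hF hm)
      rw [weight_pw_snd] at h1
      rw [weight_wZ]
      simpa [wN] using h1
    · rw [← rename_phi, h, map_zero]
      exact zero_mem _
  · intro h
    have := ev_mem_of_JJ h
    rw [cI_zero, Ideal.mem_bot, ← rename_phi] at this
    exact rename_injective _ Sum.inl_injective (by rw [this, map_zero])

lemma const_dg {γ : ℤ × ℤ} (hγ : 0 < γ) {j : ℤ} (hj : j ≠ 0) {F : PR K n r}
    (hF : F ∈ dg K n r γ j) : constantCoeff F = 0 := by
  by_contra h
  have h1 := hF (d := 0) h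
  rw [map_zero] at h1
  rcases smul_eq_zero.1 h1.symm with h2 | h2
  · exact hj h2
  · exact hγ.ne' h2

lemma zero_dg {γ : ℤ × ℤ} {F : PR K n r} (hF : F ∈ dg K n r γ 0) : ∃ a, F = C a := by
  have : F ∈ W K n r 0 0 := by
    rw [mem_dg, zero_smul] at hF
    exact hF
  rw [W_zero, Submodule.mem_one] at this
  obtain ⟨a, rfl⟩ := this
  exact ⟨a, rfl⟩

lemma neg_dg {γ : ℤ × ℤ} (hγ : 0 < γ) {j : ℤ} (hj : j < 0) {F : PR K n r}
    (hF : F ∈ dg K n r γ j) : F = 0 := eq_zero_of_neg (not_nonneg_of_neg hγ hj) hF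

variable {γ : ℤ × ℤ} (hγ : 0 < γ)
  {B : Type u} [CommRing B] [Algebra K B] {A : StdGrading K B}
  {ι : B →ₐ[K] MvPolynomial (Fin n) K} (hinj : Function.Injective ι)

/-- The images of the diagonal pieces in `S`. -/
noncomputable def sg (f : Fin r → MvPolynomial (Fin n) K) (γ : ℤ × ℤ) (j : ℤ) :
    AddSubgroup (MvPolynomial (Fin n) K) := (dg K n r γ j).map (phi f).toRingHom.toAddMonoidHom

lemma mem_sg {j : ℤ} {s : MvPolynomial (Fin n) K} :
    s ∈ sg f γ j ↔ ∃ F ∈ dg K n r γ j, phi f F = s := Iff.rfl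

lemma sg_smul (i j : ℤ) (a m : MvPolynomial (Fin n) K) (ha : a ∈ sg f γ i) (hm : m ∈ sg f γ j) :
    a • m ∈ sg f γ (i + j) := by
  obtain ⟨F, hF, rfl⟩ := ha
  obtain ⟨G, hG, rfl⟩ := hm
  refine ⟨F * G, ?_, map_mul (phi f) F G⟩
  rw [SetLike.mem_coe, mem_dg, add_smul]
  exact IsWeightedHomogeneous.mul hF hG

/-- The base change to `S` of the resolution over `P`. -/
noncomputable def CS (f : Fin r → MvPolynomial (Fin n) K) (γ : ℤ × ℤ) :
    RC (resIx (dg K n r γ)) (MvPolynomial (Fin n) K) (sg f γ) :=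
  (res (dg K n r γ)).map (phi f).toRingHom (sg f γ) (fun _ a ha => ⟨a, ha, rfl⟩)

/-- The diagonal of `P` modulo the determinantal ideal is isomorphic to its image in `S`. -/
noncomputable def isoPS (hf : RegSeq f) {e : ℕ} (he : γ.2 = e) :
    GMod.DegIso (NP hγ (JJ (fx f) (tt K n r) 0 r 0) 0 ⊥)
      ((CS f γ).toG (MvPolynomial (Fin n) K) (sg f γ) sg_smul) where
  φ := (Ideal.Quotient.lift (JJ (fx f) (tt K n r) 0 r 0) (phi f).toRingHom (fun F hF => by
    have := ev_mem_of_JJ hF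
    rw [cI_zero, Ideal.mem_bot, ← rename_phi] at this
    exact rename_injective _ Sum.inl_injective (by rw [map_zero]; exact this))).toAddMonoidHom
  mor i b m b' := by
    obtain ⟨F, rfl⟩ := Ideal.Quotient.mk_surjective m
    exact map_mul (phi f) _ F
  gφ j m hm := by
    obtain ⟨-, F, hF, rfl⟩ := hm
    rw [add_zero] at hF
    exact ⟨F, hF, rfl⟩
  inj j m hm h := by
    obtain ⟨-, F, hF, rfl⟩ := hm
    rw [add_zero] at hF
    rcases lt_or_ge j 0 with hj | hj
    · rw [neg_dg hγ hj hF, map_zero]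
    · obtain ⟨j, rfl⟩ := Int.eq_ofNat_of_zero_le hj
      refine Ideal.Quotient.eq_zero_iff_mem.2 ((phi_eq_zero_iff hf (a := (j : ℤ) * γ.1) (b := j * e) ?_).1 h)
      convert hF using 1
      ext <;> simp [he]
  surj j m hm := by
    obtain ⟨F, hF, rfl⟩ := hm
    refine ⟨Ideal.Quotient.mk _ F, ⟨fun h => absurd trivial h, F, ?_, rfl⟩, rfl⟩
    rw [add_zero]
    exact hF

variable (hT : ∀ j : ℤ, ∀ s, (∃ b ∈ bg A j, ι b = s) ↔ s ∈ sg f γ j)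

/-- The complex over `B` whose extension to `S` is `CS`. -/
noncomputable def CB : RC (resIx (dg K n r γ)) B (bg A) :=
  (CS f γ).descend ι.toRingHom hinj (bg A) (fun j s hs => (hT j s).2 hs)

lemma ι_CB (i b b') : ι ((CB hinj hT).D i b b') = (CS f γ).D i b b' := by
  obtain ⟨x, hx, e⟩ := (hT _ _).2 ((CS f γ).homog i b b')
  change ι (Function.invFun ι ((CS f γ).D i b b')) = (CS f γ).D i b b'
  rw [← e, Function.leftInverse_invFun hinj]

/-- `B` is isomorphic to its image in `S`. -/
noncomputable def isoBS : GMod.DegIso (bO (CB hinj hT))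
      ((CS f γ).toG (MvPolynomial (Fin n) K) (sg f γ) sg_smul) where
  φ := ι.toRingHom.toAddMonoidHom
  mor i b m b' := by
    change ι ((CB hinj hT).D i b b' * m) = (CS f γ).D i b b' * ι m
    rw [map_mul, ι_CB]
  gφ j m hm := (hT j _).1 ⟨m, hm, rfl⟩
  inj j m hm h := hinj (by rw [map_zero]; exact h)
  surj j m hm := (hT j m).2 hm

include hγ in
/-- The entries of the matrices over `B` and over `P` have the same residue. -/
lemma mk_CB (i b b') : Ideal.Quotient.mk A.maxIdeal ((CB hinj hT).D i b b') =
    algebraMap K _ (constantCoeff ((res (dg K n r γ)).D i b b')) := by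
  have h1 := (res (dg K n r γ)).homog i b b'
  have h2 := (CB hinj hT).homog i b b'
  have h3 : ι ((CB hinj hT).D i b b') = phi f ((res (dg K n r γ)).D i b b') := ι_CB hinj hT i b b'
  generalize (CB hinj hT).D i b b' = x at *
  generalize (res (dg K n r γ)).D i b b' = F at *
  generalize (resIx (dg K n r γ)).deg (i + 1) b - (resIx (dg K n r γ)).deg i b' = j at *
  rcases lt_trichotomy j 0 with hj | hj | hj
  · rw [neg_dg hγ hj h1, map_zero] at h3
    rw [neg_dg hγ hj h1, hinj (h3.trans (map_zero ι).symm)]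
    simp
  · rw [hj] at h1
    obtain ⟨a, rfl⟩ := zero_dg h1
    have : x = algebraMap K B a := by
      apply hinj
      rw [h3, AlgHom.commutes]
      exact (phi f).commutes a
    rw [this, constantCoeff_C]
    rfl
  · rw [const_dg hγ hj.ne' h1, map_zero]
    exact Ideal.Quotient.eq_zero_iff_mem.2 (gr_le_max A hj h2)

/-- The sequence `0 → ⨁_{j ≥ 1} P_{jγ} → ⨁_j P_{jγ} → K → 0`. -/
noncomputable def sesK [Nontrivial B] : GMod.SES (NP hγ (⊥ : Ideal (PR K n r)) 0 (UpperSet.Ici 1))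
    (NP hγ (⊥ : Ideal (PR K n r)) 0 ⊥)
    ((CB hinj hT).toG (B ⧸ A.maxIdeal) (rg A) rg_smul) where
  φ := AddMonoidHom.id _
  ψ := (Ideal.Quotient.lift (⊥ : Ideal (PR K n r))
    ((algebraMap K (B ⧸ A.maxIdeal)).comp constantCoeff) (fun F hF => by
      rw [Ideal.mem_bot.1 hF, map_zero])).toAddMonoidHom
  morφ _ _ _ _ := rfl
  morψ i b m b' := by
    obtain ⟨F, rfl⟩ := Ideal.Quotient.mk_surjective m
    change algebraMap K (B ⧸ A.maxIdeal) (constantCoeff ((res (dg K n r γ)).D i b b' * F)) =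
      Ideal.Quotient.mk A.maxIdeal ((CB hinj hT).D i b b') *
        algebraMap K (B ⧸ A.maxIdeal) (constantCoeff F)
    rw [map_mul, map_mul, mk_CB hγ]
  gφ j m hm := by
    obtain ⟨-, F, hF, rfl⟩ := hm
    exact ⟨fun h => absurd trivial h, F, hF, rfl⟩
  gψ j m hm := by
    obtain ⟨-, F, hF, rfl⟩ := hm
    rw [add_zero] at hF
    change algebraMap K (B ⧸ A.maxIdeal) (constantCoeff F) ∈ rg A j
    by_cases hj : j = 0
    · subst hj
      refine ⟨algebraMap K B (constantCoeff F), ?_, rfl⟩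
      rw [SetLike.mem_coe, A.zeroEq, Algebra.algebraMap_eq_smul_one]
      exact Submodule.smul_mem _ _ (Submodule.subset_span rfl)
    · rw [const_dg hγ hj hF, map_zero]
      exact zero_mem _
  zero j m hm := by
    obtain ⟨h, F, hF, rfl⟩ := hm
    rw [add_zero] at hF
    change algebraMap K (B ⧸ A.maxIdeal) (constantCoeff F) = 0
    by_cases hj : 1 ≤ j
    · rw [const_dg hγ (by omega) hF, map_zero]
    · rw [Ideal.mem_bot.1 (Ideal.Quotient.eq_zero_iff_mem.1 (h hj)), map_zero, map_zero]
  inj _ _ _ h := h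
  exact j m hm h := by
    obtain ⟨-, F, hF, rfl⟩ := hm
    refine ⟨Ideal.Quotient.mk _ F, ⟨fun hj => ?_, F, hF, rfl⟩, rfl⟩
    rw [add_zero] at hF
    rcases lt_trichotomy j 0 with hj' | hj' | hj'
    · rw [neg_dg hγ hj' hF, map_zero]
    · subst hj'
      obtain ⟨a, rfl⟩ := zero_dg hF
      have : Nontrivial (B ⧸ A.maxIdeal) :=
        Ideal.Quotient.nontrivial_iff.2 (fun h => one_notMem_max A (h ▸ trivial))
      have h1 : algebraMap K (B ⧸ A.maxIdeal) (constantCoeff (C a : PR K n r)) = 0 := h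
      rw [constantCoeff_C] at h1
      rw [(map_eq_zero _).1 h1, map_zero, map_zero]
    · exact absurd (by exact hj') hj
  surj j m hm := by
    by_cases hj : j = 0
    · subst hj
      obtain ⟨x, hx, rfl⟩ := hm
      rw [SetLike.mem_coe, A.zeroEq] at hx
      obtain ⟨a, rfl⟩ := Submodule.mem_span_singleton.1 hx
      refine ⟨Ideal.Quotient.mk _ (C a), ⟨fun h => absurd trivial h, C a, ?_, rfl⟩, ?_⟩
      · rw [zero_smul, add_zero]
        exact isWeightedHomogeneous_C _ a
      · change algebraMap K (B ⧸ A.maxIdeal) (constantCoeff (C a : PR K n r)) =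
          Ideal.Quotient.mk A.maxIdeal (a • 1)
        rw [constantCoeff_C, ← Algebra.algebraMap_eq_smul_one]
        rfl
    · exact ⟨0, zero_mem _, by rw [map_zero]; exact (resGr_eq_zero A hj hm).symm⟩

include hγ hinj hT in
/-- The Betti numbers off the diagonal vanish in homological degrees at most `N`. -/
theorem betti_zero [Nontrivial B] {c e d : ℕ} (hγe : γ = ((c : ℤ), (e : ℤ)))
    (hf : RegSeq f) (hfd : ∀ i, (f i).IsHomogeneous d) (hre : r = 0 ∨ 1 ≤ e) {N : ℕ}
    (hp : ∀ p, p ≤ r - 1 → p < N → p * d ≤ (p + 1) * c) {β : ℕ → ℤ → ℕ}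
    (hβ : HasBettiTable A (resGr A) β) (k : ℕ) (hk : k ≤ N) (j : ℤ) (hj : j ≠ k) : β k j = 0 := by
  obtain ⟨F⟩ := hβ
  refine linear_of_van (C := CB hinj hT) F (pt := resPt (dg K n r γ)) (resPt_deg _ _) (resPt_eq _)
    (one_le_deg _) (N := N) ?_ ?_ k hk j hj
  · intro i j hi hj
    refine (isoBS hinj hT).van_symm ((isoPS hγ hf (e := e) (by rw [hγe])).van ?_)
    exact van_det hγ hγe hf hfd hre i j (fun p h1 h2 => hp p h1 (by omega)) hj
  · intro i j hj
    refine (sesK hγ hinj hT).van_right' ?_ ?_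
    · exact NP_van_full (s := 0) (by simp) (Or.inr rfl) (Or.inr rfl) (by omega)
    · rintro i' rfl
      have := NP_van_vars (hγ := hγ) (K := K) i' (∅ : Finset (Fin n ⊕ Fin r)) 0 1 (by simpa using hγ.le)
        (Or.inr rfl) (Or.inr rfl) j (by push_cast at hj; omega)
      rwa [show bI K (∅ : Finset (Fin n ⊕ Fin r)) = ⊥ by simp [bI]] at this

/-- `betti_zero` with the graded pieces of `B` identified with the images of the pieces `P_{(jc,je)}`. -/
theorem betti_zero' {c e d : ℕ} (hce : 0 < c + e) (hinj : Function.Injective ι)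
    (hgr : ∀ j : ℕ, (A.gr (j : ℤ)).map (ι.toLinearMap : B →ₗ[K] _) =
      (W K n r (j * c) (j * e)).map (phi f).toLinearMap)
    (hf : RegSeq f) (hfd : ∀ i, (f i).IsHomogeneous d) (hre : r = 0 ∨ 1 ≤ e) {N : ℕ}
    (hp : ∀ p, p ≤ r - 1 → p < N → p * d ≤ (p + 1) * c) {β : ℕ → ℤ → ℕ}
    (hβ : HasBettiTable A (resGr A) β) (k : ℕ) (hk : k ≤ N) (j : ℤ) (hj : j ≠ k) : β k j = 0 := by
  have : Nontrivial B := ι.toRingHom.domain_nontrivial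
  have hγ : (0 : ℤ × ℤ) < ((c : ℤ), (e : ℤ)) := by
    refine lt_of_le_of_ne ⟨by simp, by simp⟩ fun h => ?_
    simp [Prod.ext_iff] at h
    omega
  refine betti_zero hγ hinj (f := f) (A := A) ?_ rfl hf hfd hre hp hβ k hk j hj
  intro j s
  rcases lt_or_ge j 0 with hj | hj
  · constructor
    · rintro ⟨b, hb, rfl⟩
      have hb' : b ∈ A.gr j := hb
      rw [A.negBot j hj, Submodule.mem_bot] at hb'
      rw [hb', map_zero]
      exact zero_mem _
    · rintro ⟨F, hF, rfl⟩
      refine ⟨0, zero_mem _, ?_⟩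
      rw [neg_dg hγ hj hF, map_zero, map_zero]
  · obtain ⟨j, rfl⟩ := Int.eq_ofNat_of_zero_le hj
    have h1 : s ∈ (A.gr (j : ℤ)).map (ι.toLinearMap : B →ₗ[K] _) ↔
      s ∈ (W K n r (j * c) (j * e)).map (phi f).toLinearMap := by rw [hgr]
    have h2 : dg K n r ((c : ℤ), (e : ℤ)) j = (W K n r (j * c) (j * e)).toAddSubgroup := by
      ext F
      change IsWeightedHomogeneous _ _ _ ↔ IsWeightedHomogeneous _ _ _
      simp
    rw [mem_sg, h2]
    exact h1

end Transfer

end Stmt16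

/-- Let `f_1,…,f_r` be a regular sequence of forms of degree `d` in `S = K[x_1,…,x_n]`,
`I = (f_1,…,f_r)` and `A = K[(I^e)_{ed+c}]` the standard graded subalgebra of `S`
generated (in degree one) by the component of degree `ed + c` of `I^e`,
realized by `(B, Bgr, ι)`. Then:
(1) if `c ≥ d/2` then `A` is quadratic (the resolution of `K` over `A` is linear in
homological degrees `≤ 2`); (2) if `c ≥ d(r−1)/r` then `A` is Koszul. -/
theorem stmt16 {K : Type u} [Field K] {n : ℕ} (r d : ℕ)
    (f : Fin r → MvPolynomial (Fin n) K)
    (hfd : ∀ i, f i ∈ MvPolynomial.homogeneousSubmodule (Fin n) K d)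
    (hreg : RingTheory.Sequence.IsRegular (MvPolynomial (Fin n) K) (List.ofFn f))
    (e c : ℕ)
    (B : Type u) [CommRing B] [Algebra K B] (Bgr : StdGrading K B)
    (ι : B →ₐ[K] MvPolynomial (Fin n) K) (hinj : Function.Injective ι)
    (hgr : ∀ j : ℕ, (Bgr.gr (j : ℤ)).map (ι.toLinearMap : B →ₗ[K] _) =
      (Submodule.restrictScalars K ((Ideal.span (Set.range f)) ^ e) ⊓
        MvPolynomial.homogeneousSubmodule (Fin n) K (e * d + c)) ^ j) :
    (d ≤ 2 * c →
      ∀ β : ℕ → ℤ → ℕ, HasBettiTable Bgr (resGr Bgr) β →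
        ∀ i : ℕ, i ≤ 2 → ∀ j : ℤ, j ≠ (i : ℤ) → β i j = 0) ∧
    (d * (r - 1) ≤ r * c → IsKoszul Bgr) := by
  have hf := Stmt16.regSeq_of_isRegular hreg
  have key : ∀ N : ℕ, (∀ p, p ≤ r - 1 → p < N → p * d ≤ (p + 1) * c) →
      ∀ β : ℕ → ℤ → ℕ, HasBettiTable Bgr (resGr Bgr) β →
        ∀ k : ℕ, k ≤ N → ∀ j : ℤ, j ≠ (k : ℤ) → β k j = 0 := by
    intro N hp β hβ k hk j hj
    rcases Nat.eq_zero_or_pos e with he | he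
    · subst he
      rcases Nat.eq_zero_or_pos c with hc | hc
      -- Here `Bgr.gr 0` and `Bgr.gr 1` would both be `K`, contradicting independence.
      · subst hc
        exfalso
        have : Nontrivial B := ι.toRingHom.domain_nontrivial
        have h1 := hgr 1
        have h0 := hgr 0
        rw [pow_one, Stmt16.gen_eq hfd, Stmt16.W_zero, Submodule.map_one] at h1
        rw [pow_zero] at h0
        have h2 : Bgr.gr ((0 : ℕ) : ℤ) = Bgr.gr ((1 : ℕ) : ℤ) :=
          Submodule.map_injective_of_injective hinj (h0.trans h1.symm)
        have h3 := Stmt16.one_mem_gr Bgr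
        have h4 : (1 : B) ∈ Bgr.gr 1 := by
          have : (1 : B) ∈ Bgr.gr ((0 : ℕ) : ℤ) := h3
          rw [h2] at this
          exact this
        have h5 := Bgr.internal.submodule_iSupIndep.pairwiseDisjoint (zero_ne_one (α := ℤ))
        exact one_ne_zero (Submodule.disjoint_def.1 h5 1 h3 h4)
      -- The ideal plays no role, so the sequence may be replaced by the empty one.
      · refine Stmt16.betti_zero' (n := n) (r := 0) (f := Fin.elim0) (c := c) (e := 0) (d := d)
          (by omega) hinj (fun m => ?_) (fun i hi => absurd hi (Nat.not_lt_zero i))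
          (fun i => i.elim0) (Or.inl rfl) (N := N) (fun p h1 h2 => ?_) hβ k hk j hj
        · rw [hgr, ← Stmt16.gen_pow (d := d) (fun i => i.elim0)]
          simp only [pow_zero]
        · exact hp p (by omega) h2
    · refine Stmt16.betti_zero' (by omega) hinj (fun m => ?_) hf hfd (Or.inr he) hp hβ k hk j hj
      rw [hgr, Stmt16.gen_pow hfd]
  refine ⟨fun hd β hβ i hi j hj => key 2 ?_ β hβ i hi j hj,
    fun hd β hβ i j hj => key i ?_ β hβ i le_rfl j hj⟩
  · intro p _ hp
    interval_cases p <;> omega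
  · intro p hp _
    rcases Nat.eq_zero_or_pos p with h | h
    · simp [h]
    -- `d (r - 1) ≤ r c` gives `p d r ≤ (p + 1)(r - 1) d ≤ (p + 1) r c` as `p ≤ r - 1`.
    · obtain ⟨q, rfl⟩ : ∃ q, r = q + 1 := ⟨r - 1, by omega⟩
      rw [Nat.add_sub_cancel] at hd hp
      have h1 : p * d * (q + 1) ≤ (p + 1) * (d * q) := by nlinarith
      have h2 : (p + 1) * (d * q) ≤ (p + 1) * ((q + 1) * c) := Nat.mul_le_mul_left _ hd
      refine Nat.le_of_mul_le_mul_right (c := q + 1) ?_ (by omega)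
      nlinarith
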